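/- arXiv:2302.01077 — 3 statements merged into one kernel-verified Lean document; each statement's English description precedes it below -/
import Mathlib

section
/- Let f be a bijective transformation of G_∞(H) which preserves the ortho-adjacency relation in both directions (i.e., X, Y are ortho-adjacent if and only if f(X), f(Y) are ortho-adjacent). Then for every A-component C of G_∞(H), either there exists a unitary or anti-unitary operator U on H such that f(X) = U(X) for all X ∈ C, or there exists a unitary or anti-unitary operator U on H such that f(X) = (U(X))^⊥ for all X ∈ C. -/
open Module Submodule Classical

variable {H : Type*} [NormedAddCommGroup H] [InnerProductSpace ℂ H] [CompleteSpace H]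

/-- The orthogonal projection of `H` onto a closed subspace `K`, as a map `H →L[ℂ] H`
(defined to be `0` if `K` is not closed). -/
noncomputable def projCLM (K : Submodule ℂ H) : H →L[ℂ] H :=
  if h : IsClosed (K : Set H) then
    haveI : CompleteSpace K := h.completeSpace_coe
    K.subtypeL.comp (orthogonalProjection K)
  else 0

/-- Two (closed) subspaces are compatible if their orthogonal projections commute. -/
def Compatible (K L : Submodule ℂ H) : Prop := Commute (projCLM K) (projCLM L)

/-- `W` is a subspace of `X` of finite codimension `n` in `X`. -/
def CodimIn (W X : Submodule ℂ H) (n : ℕ) : Prop :=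
  W ≤ X ∧ FiniteDimensional ℂ (↥X ⧸ W.comap X.subtype) ∧
    finrank ℂ (↥X ⧸ W.comap X.subtype) = n

/-- `X` and `Y` are adjacent: `X ∩ Y` is a hyperplane in both `X` and `Y`. -/
def Adjacent (X Y : Submodule ℂ H) : Prop :=
  CodimIn (X ⊓ Y) X 1 ∧ CodimIn (X ⊓ Y) Y 1

/-- `X` and `Y` are ortho-adjacent: adjacent and compatible. -/
def OrthoAdjacent (X Y : Submodule ℂ H) : Prop := Adjacent X Y ∧ Compatible X Y

/-- The Grassmannian `G_∞(H)` of closed subspaces of `H` whose dimension and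
codimension both are infinite. -/
def Ginf : Set (Submodule ℂ H) :=
  {X | IsClosed (X : Set H) ∧ ¬FiniteDimensional ℂ X ∧ ¬FiniteDimensional ℂ Xᗮ}

/-- `X ∩ Y` has the same finite codimension in both `X` and `Y`. -/
def SameFinCodim (X Y : Submodule ℂ H) : Prop :=
  ∃ n : ℕ, CodimIn (X ⊓ Y) X n ∧ CodimIn (X ⊓ Y) Y n

/-- An `A`-component of `G_∞(H)`: a set of elements pairwise at the same finite
codimension, maximal with respect to this property. -/
def IsAComponent (C : Set (Submodule ℂ H)) : Prop :=
  C ⊆ Ginf ∧ (∀ X ∈ C, ∀ Y ∈ C, SameFinCodim X Y) ∧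
    ∀ D : Set (Submodule ℂ H), D ⊆ Ginf → (∀ X ∈ D, ∀ Y ∈ D, SameFinCodim X Y) →
      C ⊆ D → D = C

/-- The star `S(X)`: all closed subspaces of `H` containing `X` as a hyperplane. -/
def starSet (X : Submodule ℂ H) : Set (Submodule ℂ H) :=
  {Y | IsClosed (Y : Set H) ∧ CodimIn X Y 1}

/-- The top `G¹(X)`: all closed hyperplanes of `X`. -/
def topSet (X : Submodule ℂ H) : Set (Submodule ℂ H) :=
  {M | IsClosed (M : Set H) ∧ CodimIn M X 1}

/-- The image `U(M)` of a subspace `M ⊆ X` under a linear isometry `U : X ≃ X'`,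
viewed as a subspace of `H`. -/
def imL (X X' : Submodule ℂ H) (U : ↥X ≃ₗᵢ[ℂ] ↥X') (M : Submodule ℂ H) : Submodule ℂ H :=
  Submodule.map X'.subtype (Submodule.map U.toLinearEquiv.toLinearMap (M.comap X.subtype))

/-- The image `U(M)` of a subspace `M ⊆ X` under a conjugate-linear isometry `U : X ≃ X'`,
viewed as a subspace of `H`. -/
def imC (X X' : Submodule ℂ H) (U : ↥X ≃ₗᵢ⋆[ℂ] ↥X') (M : Submodule ℂ H) : Submodule ℂ H :=
  Submodule.map X'.subtype (Submodule.map U.toLinearEquiv.toLinearMap (M.comap X.subtype))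

/-- The Grassmannian `G_k(H)` of `k`-dimensional subspaces of `H`. -/
def Gk (k : ℕ) : Set (Submodule ℂ H) :=
  {X | FiniteDimensional ℂ X ∧ finrank ℂ X = k}

/-- The Grassmannian `G^k(H)` of closed subspaces of `H` of codimension `k`. -/
def GCk (k : ℕ) : Set (Submodule ℂ H) :=
  {X | IsClosed (X : Set H) ∧ FiniteDimensional ℂ (H ⧸ X) ∧ finrank ℂ (H ⧸ X) = k}

/-!
Ortho-adjacency determines adjacency: two distinct elements of `G_∞(H)` are adjacent exactly when
they have three common pairwise ortho-adjacent neighbours. Hence `f` preserves adjacency and maps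
every star (all subspaces covering some `W`) into a star or into a top (all hyperplanes of some
subspace). The type is the same for adjacent `W`, so it is constant along an `A`-component, and
after composing with `ᗮ` all stars go to stars. If `c ⟂ W` and the star of `W` goes to the star
of `A`, the orthogonal complement of `A` in `f (W ⊔ ℂ ∙ c)` is a line that does not depend on `W`.
This defines an orthogonality-preserving surjection of the projective space of `H`, which by
Uhlhorn's theorem comes from a unitary or anti-unitary operator `U`. Since `U` maps `X` into `f X`
and `Xᗮ` into `(f X)ᗮ`, it follows that `f X = U X`.
-/

section Uhlhorn

variable {𝕜 E F : Type*} [RCLike 𝕜] [NormedAddCommGroup E] [InnerProductSpace 𝕜 E]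
  [NormedAddCommGroup F] [InnerProductSpace 𝕜 F]

variable (𝕜) in
/-- `φ` represents, on vectors, a surjective map between the projective spaces of `E` and `F`
which preserves orthogonality of lines in both directions. No homogeneity is required of `φ`: the
representative of the image of each line is arbitrary and may vary with the vector. -/
structure IsOrthoProjective (φ : E → F) : Prop where
  inner_map_eq_zero_iff : ∀ x y, inner 𝕜 (φ x) (φ y) = 0 ↔ inner 𝕜 x y = 0
  exists_smul_eq : ∀ y, ∃ x, ∃ t : 𝕜, t • φ x = y

section Chart

variable {𝕜 E F : Type*} [RCLike 𝕜] [NormedAddCommGroup F] [InnerProductSpace 𝕜 F]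

variable (𝕜) in
/-- The unit vector in the direction of `φ e`. -/
noncomputable def unitImage (φ : E → F) (e : E) : F := (‖φ e‖⁻¹ : 𝕜) • φ e

variable [AddCommGroup E]

variable (𝕜) in
/-- The affine chart of `φ` at a unit vector `e`: for `v` orthogonal to `e`, the line of
`φ (e + v)` meets the hyperplane of vectors with component `unitImage 𝕜 φ e` along that unit vector
in the single point `unitImage 𝕜 φ e + chart 𝕜 φ e v`. -/
noncomputable def chart (φ : E → F) (e v : E) : F :=
  (inner 𝕜 (unitImage 𝕜 φ e) (φ (e + v)))⁻¹ • φ (e + v) - unitImage 𝕜 φ e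

lemma unitImage_add_chart (φ : E → F) (e v : E) : unitImage 𝕜 φ e + chart 𝕜 φ e v =
    (inner 𝕜 (unitImage 𝕜 φ e) (φ (e + v)))⁻¹ • φ (e + v) := by
  rw [chart, add_sub_cancel]

end Chart

lemma sub_mem_span_singleton_of_add_mem_span_pair {b u u' q : E} (hb : b ≠ 0)
    (hu : inner 𝕜 b u = 0) (hu' : inner 𝕜 b u' = 0) (hq : inner 𝕜 b q = 0)
    (h : b + u ∈ span 𝕜 {b + u', q}) : u - u' ∈ 𝕜 ∙ q := by
  obtain ⟨s, t, hst⟩ := mem_span_pair.1 h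
  have hs : s = 1 := by
    have := congrArg (inner 𝕜 b) hst
    simp only [inner_add_right, inner_smul_right, hu, hu', hq, mul_zero, add_zero] at this
    exact (mul_eq_right₀ (inner_self_ne_zero.2 hb)).1 this
  refine mem_span_singleton.2 ⟨t, ?_⟩
  rw [hs, one_smul] at hst
  rw [eq_sub_iff_add_eq', ← add_right_inj b, ← add_assoc, hst]

lemma inner_eq_neg_one_iff_inner_add_eq_zero {b x y : E} (hb : ‖b‖ = 1) (hx : inner 𝕜 b x = 0)
    (hy : inner 𝕜 b y = 0) : inner 𝕜 x y = -1 ↔ inner 𝕜 (b + x) (b + y) = 0 := by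
  rw [inner_add_left, inner_add_right, inner_add_right, hy, inner_eq_zero_symm.1 hx,
    inner_self_eq_norm_sq_to_K, hb, add_zero, zero_add, add_comm]
  simp [add_eq_zero_iff_eq_neg]

namespace IsOrthoProjective

variable {φ : E → F}

lemma map_eq_zero_iff (hφ : IsOrthoProjective 𝕜 φ) {x : E} : φ x = 0 ↔ x = 0 := by
  rw [← inner_self_eq_zero (𝕜 := 𝕜), hφ.inner_map_eq_zero_iff, inner_self_eq_zero]

lemma map_mem_span_pair (hφ : IsOrthoProjective 𝕜 φ) (x y : E) {z : E} (hz : z ∈ span 𝕜 {x, y}) :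
    φ z ∈ span 𝕜 {φ x, φ y} := by
  have : FiniteDimensional 𝕜 (span 𝕜 {φ x, φ y}) := .span_of_finite 𝕜 (by simp)
  rw [← orthogonal_orthogonal (span 𝕜 {φ x, φ y})]
  intro w hw
  obtain ⟨u, t, rfl⟩ := hφ.exists_smul_eq w
  rcases eq_or_ne t 0 with rfl | ht
  · simp
  have hxu : inner 𝕜 x u = 0 ∧ inner 𝕜 y u = 0 := by
    simpa [inner_smul_right, ht, hφ.inner_map_eq_zero_iff] using
      And.intro (hw (φ x) (subset_span (by simp))) (hw (φ y) (subset_span (by simp)))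
  obtain ⟨a, b, rfl⟩ := mem_span_pair.1 hz
  rw [inner_smul_left, (hφ.inner_map_eq_zero_iff _ _).2, mul_zero]
  rw [inner_add_right, inner_smul_right, inner_smul_right, inner_eq_zero_symm.1 hxu.1,
    inner_eq_zero_symm.1 hxu.2, mul_zero, mul_zero, add_zero]

lemma map_smul_mem (hφ : IsOrthoProjective 𝕜 φ) (t : 𝕜) (x : E) : φ (t • x) ∈ 𝕜 ∙ φ x := by
  simpa using hφ.map_mem_span_pair x x (smul_mem _ t (subset_span (by simp)))

variable {e : E}

lemma norm_unitImage (hφ : IsOrthoProjective 𝕜 φ) (he : ‖e‖ = 1) : ‖unitImage 𝕜 φ e‖ = 1 := by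
  have : φ e ≠ 0 := hφ.map_eq_zero_iff.not.2 (norm_ne_zero_iff.1 (by simp [he]))
  simp [unitImage, norm_smul, this]

lemma inner_unitImage_map_eq_zero_iff (hφ : IsOrthoProjective 𝕜 φ) {x : E} :
    inner 𝕜 (unitImage 𝕜 φ e) (φ x) = 0 ↔ inner 𝕜 e x = 0 := by
  rcases eq_or_ne e 0 with rfl | he
  · simp [unitImage, hφ.map_eq_zero_iff.2 rfl]
  · simp [unitImage, inner_smul_left, hφ.inner_map_eq_zero_iff, hφ.map_eq_zero_iff, he]

lemma inner_unitImage_map_add_ne_zero (hφ : IsOrthoProjective 𝕜 φ) (he : ‖e‖ = 1) {v : E}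
    (hv : inner 𝕜 e v = 0) : inner 𝕜 (unitImage 𝕜 φ e) (φ (e + v)) ≠ 0 := by
  rw [Ne, hφ.inner_unitImage_map_eq_zero_iff, inner_add_right, hv, inner_self_eq_norm_sq_to_K, he]
  simp

lemma inner_unitImage_chart (hφ : IsOrthoProjective 𝕜 φ) (he : ‖e‖ = 1) {v : E}
    (hv : inner 𝕜 e v = 0) : inner 𝕜 (unitImage 𝕜 φ e) (chart 𝕜 φ e v) = 0 := by
  rw [chart, inner_sub_right, inner_smul_right,
    inv_mul_cancel₀ (hφ.inner_unitImage_map_add_ne_zero he hv), inner_self_eq_norm_sq_to_K,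
    hφ.norm_unitImage he]
  simp

lemma span_unitImage_add_chart (hφ : IsOrthoProjective 𝕜 φ) (he : ‖e‖ = 1) {v : E}
    (hv : inner 𝕜 e v = 0) : 𝕜 ∙ (unitImage 𝕜 φ e + chart 𝕜 φ e v) = 𝕜 ∙ φ (e + v) := by
  rw [unitImage_add_chart]
  exact span_singleton_smul_eq (inv_ne_zero (hφ.inner_unitImage_map_add_ne_zero he hv)).isUnit _

lemma chart_zero (hφ : IsOrthoProjective 𝕜 φ) (he : ‖e‖ = 1) : chart 𝕜 φ e 0 = 0 := by
  have : φ e ≠ 0 := hφ.map_eq_zero_iff.not.2 (norm_ne_zero_iff.1 (by simp [he]))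
  have hnorm : inner 𝕜 (unitImage 𝕜 φ e) (φ e) = ‖φ e‖ := by
    rw [unitImage, inner_smul_left, inner_self_eq_norm_sq_to_K]
    simp [sq, this]
  rw [chart, add_zero, hnorm, unitImage, sub_self]

lemma chart_add_sub_chart_mem (hφ : IsOrthoProjective 𝕜 φ) (he : ‖e‖ = 1) {v w : E}
    (hv : inner 𝕜 e v = 0) (hw : inner 𝕜 e w = 0) :
    chart 𝕜 φ e (v + w) - chart 𝕜 φ e v ∈ 𝕜 ∙ φ w := by
  have hvw : inner 𝕜 e (v + w) = 0 := by rw [inner_add_right, hv, hw, add_zero]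
  refine sub_mem_span_singleton_of_add_mem_span_pair
    (norm_ne_zero_iff.1 (by simp [hφ.norm_unitImage he])) (hφ.inner_unitImage_chart he hvw)
    (hφ.inner_unitImage_chart he hv) (hφ.inner_unitImage_map_eq_zero_iff.2 hw) ?_
  rw [span_insert, hφ.span_unitImage_add_chart he hv, ← span_insert, unitImage_add_chart]
  exact smul_mem _ _ (hφ.map_mem_span_pair _ _ (mem_span_pair.2 ⟨1, 1, by module⟩))

lemma chart_mem (hφ : IsOrthoProjective 𝕜 φ) (he : ‖e‖ = 1) {v : E} (hv : inner 𝕜 e v = 0) :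
    chart 𝕜 φ e v ∈ 𝕜 ∙ φ v := by
  simpa [hφ.chart_zero he] using hφ.chart_add_sub_chart_mem he (inner_zero_right e) hv

lemma inner_chart_eq_neg_one_iff (hφ : IsOrthoProjective 𝕜 φ) (he : ‖e‖ = 1) {v w : E}
    (hv : inner 𝕜 e v = 0) (hw : inner 𝕜 e w = 0) :
    inner 𝕜 (chart 𝕜 φ e v) (chart 𝕜 φ e w) = -1 ↔ inner 𝕜 v w = -1 := by
  rw [inner_eq_neg_one_iff_inner_add_eq_zero he hv hw,
    inner_eq_neg_one_iff_inner_add_eq_zero (hφ.norm_unitImage he)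
      (hφ.inner_unitImage_chart he hv) (hφ.inner_unitImage_chart he hw),
    unitImage_add_chart, unitImage_add_chart, inner_smul_left, inner_smul_right,
    ← hφ.inner_map_eq_zero_iff, mul_eq_zero_iff_left, mul_eq_zero_iff_left]
  · exact inv_ne_zero (hφ.inner_unitImage_map_add_ne_zero he hw)
  · exact (map_ne_zero _).2 (inv_ne_zero (hφ.inner_unitImage_map_add_ne_zero he hv))

lemma chart_ne_zero (hφ : IsOrthoProjective 𝕜 φ) (he : ‖e‖ = 1) {v : E} (hv : inner 𝕜 e v = 0)
    (hv0 : v ≠ 0) : chart 𝕜 φ e v ≠ 0 := by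
  intro h
  have hvv : inner 𝕜 v v ≠ 0 := inner_self_ne_zero.2 hv0
  have := (hφ.inner_chart_eq_neg_one_iff he hv (w := -(inner 𝕜 v v)⁻¹ • v)
    (by rw [inner_smul_right, hv, mul_zero])).2 (by rw [inner_smul_right]; field_simp)
  simp [h] at this

lemma inner_chart_eq_zero (hφ : IsOrthoProjective 𝕜 φ) (he : ‖e‖ = 1) {v w : E}
    (hv : inner 𝕜 e v = 0) (hw : inner 𝕜 e w = 0) (hvw : inner 𝕜 v w = 0) :
    inner 𝕜 (chart 𝕜 φ e v) (chart 𝕜 φ e w) = 0 := by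
  obtain ⟨s, hs⟩ := mem_span_singleton.1 (hφ.chart_mem he hv)
  obtain ⟨t, ht⟩ := mem_span_singleton.1 (hφ.chart_mem he hw)
  rw [← hs, ← ht, inner_smul_left, inner_smul_right, (hφ.inner_map_eq_zero_iff _ _).2 hvw, mul_zero,
    mul_zero]

lemma exists_chart_smul_eq (hφ : IsOrthoProjective 𝕜 φ) (he : ‖e‖ = 1) {v : E}
    (hv : inner 𝕜 e v = 0) (t : 𝕜) : ∃ s : 𝕜, chart 𝕜 φ e (t • v) = s • chart 𝕜 φ e v := by
  rcases eq_or_ne v 0 with rfl | hv0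
  · exact ⟨0, by rw [smul_zero, hφ.chart_zero he, smul_zero]⟩
  have htv : chart 𝕜 φ e (t • v) ∈ 𝕜 ∙ φ v :=
    (span_singleton_le_iff_mem _ _).2 (hφ.map_smul_mem t v)
      (hφ.chart_mem he (by rw [inner_smul_right, hv, mul_zero]))
  obtain ⟨a, ha⟩ := mem_span_singleton.1 (hφ.chart_mem he hv)
  have ha0 : a ≠ 0 := by
    rintro rfl
    exact hφ.chart_ne_zero he hv hv0 (by rw [← ha, zero_smul])
  obtain ⟨b, hb⟩ := mem_span_singleton.1 htv
  exact ⟨b * a⁻¹, by rw [← ha, ← hb, smul_smul, inv_mul_cancel_right₀ ha0]⟩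

lemma chart_add (hφ : IsOrthoProjective 𝕜 φ) (he : ‖e‖ = 1) {v w : E} (hv : inner 𝕜 e v = 0)
    (hw : inner 𝕜 e w = 0) (hvw : inner 𝕜 v w = 0) :
    chart 𝕜 φ e (v + w) = chart 𝕜 φ e v + chart 𝕜 φ e w := by
  set d := chart 𝕜 φ e (v + w) - (chart 𝕜 φ e v + chart 𝕜 φ e w) with hd
  have hdw : d ∈ 𝕜 ∙ φ w := by
    rw [hd, ← sub_sub]
    exact sub_mem (hφ.chart_add_sub_chart_mem he hv hw) (hφ.chart_mem he hw)
  have hdv : d ∈ 𝕜 ∙ φ v := by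
    rw [hd, add_comm v, add_comm (chart 𝕜 φ e v), ← sub_sub]
    exact sub_mem (hφ.chart_add_sub_chart_mem he hw hv) (hφ.chart_mem he hv)
  obtain ⟨s, hs⟩ := mem_span_singleton.1 hdv
  obtain ⟨t, ht⟩ := mem_span_singleton.1 hdw
  have hdd : inner 𝕜 d d = 0 := by
    nth_rw 1 [← hs]
    rw [← ht, inner_smul_left, inner_smul_right, (hφ.inner_map_eq_zero_iff v w).2 hvw, mul_zero,
      mul_zero]
  exact sub_eq_zero.1 (inner_self_eq_zero.1 hdd)

lemma chart_smul_eq_of_orthogonal (hφ : IsOrthoProjective 𝕜 φ) (he : ‖e‖ = 1) {v w : E}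
    (hv : inner 𝕜 e v = 0) (hw : inner 𝕜 e w = 0) (hvw : inner 𝕜 v w = 0) (hv0 : v ≠ 0) {s t : 𝕜}
    (h : chart 𝕜 φ e (t • v) = s • chart 𝕜 φ e v) :
    chart 𝕜 φ e (t • w) = s • chart 𝕜 φ e w := by
  rcases eq_or_ne w 0 with rfl | hw0
  · rw [smul_zero, hφ.chart_zero he, smul_zero]
  obtain ⟨r, hr⟩ := hφ.exists_chart_smul_eq he hw t
  obtain ⟨q, hq⟩ := hφ.exists_chart_smul_eq he (v := v + w)
    (by rw [inner_add_right, hv, hw, add_zero]) t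
  have hort := hφ.inner_chart_eq_zero he hv hw hvw
  rw [smul_add, hφ.chart_add he (by rw [inner_smul_right, hv, mul_zero])
    (by rw [inner_smul_right, hw, mul_zero])
    (by rw [inner_smul_left, inner_smul_right, hvw, mul_zero, mul_zero]), hφ.chart_add he hv hw hvw,
    h, hr, smul_add] at hq
  have hsq : s = q := by
    have := congrArg (inner 𝕜 (chart 𝕜 φ e v)) hq
    simpa [inner_add_right, inner_smul_right, hort, hφ.chart_ne_zero he hv hv0] using this
  have hrq : r = q := by
    have := congrArg (inner 𝕜 (chart 𝕜 φ e w)) hq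
    simpa [inner_add_right, inner_smul_right, inner_eq_zero_symm.1 hort,
      hφ.chart_ne_zero he hw hw0] using this
  rw [hr, hrq, hsq]

-- The scalar attached to `t` by `v₀` transfers to every vector orthogonal to `v₀`, and through `v₁`
-- also to the multiples of `v₀`.
lemma exists_scalar_chart_smul (hφ : IsOrthoProjective 𝕜 φ) {v₀ v₁ : E} (he : ‖e‖ = 1)
    (hv₀ : inner 𝕜 e v₀ = 0) (hv₁ : inner 𝕜 e v₁ = 0) (h₀₁ : inner 𝕜 v₀ v₁ = 0)
    (h₀ : v₀ ≠ 0) (h₁ : v₁ ≠ 0) (t : 𝕜) :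
    ∃ s : 𝕜, ∀ v, inner 𝕜 e v = 0 → chart 𝕜 φ e (t • v) = s • chart 𝕜 φ e v := by
  obtain ⟨s, hs⟩ := hφ.exists_chart_smul_eq he hv₀ t
  refine ⟨s, fun v hv => ?_⟩
  obtain ⟨_, hp, q, hq, rfl⟩ := (𝕜 ∙ v₀).exists_add_mem_mem_orthogonal v
  obtain ⟨a, rfl⟩ := mem_span_singleton.1 hp
  have hav₀ : inner 𝕜 e (a • v₀) = 0 := by rw [inner_smul_right, hv₀, mul_zero]
  have hv₀q : inner 𝕜 v₀ q = 0 := mem_orthogonal_singleton_iff_inner_right.1 hq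
  have heq : inner 𝕜 e q = 0 := by rwa [inner_add_right, hav₀, zero_add] at hv
  have hsq := hφ.chart_smul_eq_of_orthogonal he hv₀ heq hv₀q h₀ hs
  have hsa := hφ.chart_smul_eq_of_orthogonal he hv₁ hav₀
    (by rw [inner_smul_right, inner_eq_zero_symm.1 h₀₁, mul_zero]) h₁
    (hφ.chart_smul_eq_of_orthogonal he hv₀ hv₁ h₀₁ h₀ hs)
  rw [smul_add, hφ.chart_add he (by rw [inner_smul_right, hav₀, mul_zero])
    (by rw [inner_smul_right, heq, mul_zero])
    (by rw [inner_smul_left, inner_smul_left, inner_smul_right, hv₀q]; simp),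
    hφ.chart_add he hav₀ heq (by rw [inner_smul_left, hv₀q, mul_zero]), hsa, hsq, smul_add]

-- Additivity of the scalar action compares the charts of the orthogonal vectors `s • v₀ + v₁` and
-- `t • v₀ - (conj s * t) • v₁` with that of their sum.
lemma exists_ringHom_chart_smul (hφ : IsOrthoProjective 𝕜 φ) {v₀ v₁ : E} (he : ‖e‖ = 1)
    (hv₀ : inner 𝕜 e v₀ = 0) (hv₁ : inner 𝕜 e v₁ = 0) (h₀₁ : inner 𝕜 v₀ v₁ = 0)
    (h₀ : ‖v₀‖ = 1) (h₁ : ‖v₁‖ = 1) :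
    ∃ σ : 𝕜 →+* 𝕜, ∀ (t : 𝕜) v, inner 𝕜 e v = 0 → chart 𝕜 φ e (t • v) = σ t • chart 𝕜 φ e v := by
  have h₀' : v₀ ≠ 0 := norm_ne_zero_iff.1 (by simp [h₀])
  choose σ hσ using
    hφ.exists_scalar_chart_smul he hv₀ hv₁ h₀₁ h₀' (norm_ne_zero_iff.1 (by simp [h₁]))
  have hsm (t : 𝕜) {v : E} (hv : inner 𝕜 e v = 0) : inner 𝕜 e (t • v) = 0 := by
    rw [inner_smul_right, hv, mul_zero]
  have hinj : Function.Injective fun s : 𝕜 => s • chart 𝕜 φ e v₀ :=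
    smul_left_injective 𝕜 (hφ.chart_ne_zero he hv₀ h₀')
  have hσ_one : σ 1 = 1 := hinj <| by simp only [← hσ 1 v₀ hv₀, one_smul]
  have hσ_mul (s t : 𝕜) : σ (s * t) = σ s * σ t :=
    hinj <| by simp only [← hσ (s * t) v₀ hv₀, mul_smul, hσ s _ (hsm t hv₀), hσ t v₀ hv₀]
  have chart_comb (a b : 𝕜) : chart 𝕜 φ e (a • v₀ + b • v₁) =
      σ a • chart 𝕜 φ e v₀ + σ b • chart 𝕜 φ e v₁ := by
    rw [hφ.chart_add he (hsm a hv₀) (hsm b hv₁), hσ a v₀ hv₀, hσ b v₁ hv₁]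
    rw [inner_smul_left, inner_smul_right, h₀₁, mul_zero, mul_zero]
  have hσ_add (s t : 𝕜) : σ (s + t) = σ s + σ t := by
    have horth : inner 𝕜 (s • v₀ + (1 : 𝕜) • v₁) (t • v₀ + (-(starRingEnd 𝕜 s * t)) • v₁) = 0 := by
      simp only [inner_add_left, inner_add_right, inner_smul_left, inner_smul_right, h₀₁,
        inner_eq_zero_symm.1 h₀₁, inner_self_eq_norm_sq_to_K, h₀, h₁]
      simp [mul_comm]
    have hsum := hφ.chart_add he
      (by rw [inner_add_right, hsm s hv₀, hsm 1 hv₁, add_zero])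
      (by rw [inner_add_right, hsm t hv₀, hsm _ hv₁, add_zero]) horth
    rw [show s • v₀ + (1 : 𝕜) • v₁ + (t • v₀ + (-(starRingEnd 𝕜 s * t)) • v₁) =
      (s + t) • v₀ + (1 - starRingEnd 𝕜 s * t) • v₁ by module, chart_comb, chart_comb,
      chart_comb] at hsum
    have hcoord := congrArg (inner 𝕜 (chart 𝕜 φ e v₀)) hsum
    simp only [inner_add_right, inner_smul_right, hφ.inner_chart_eq_zero he hv₀ hv₁ h₀₁, mul_zero,
      add_zero, ← add_mul] at hcoord
    exact mul_right_cancel₀ (inner_self_ne_zero.2 (hφ.chart_ne_zero he hv₀ h₀')) hcoord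
  exact ⟨RingHom.mk' ⟨⟨σ, hσ_one⟩, hσ_mul⟩ hσ_add, hσ⟩

lemma inner_chart (hφ : IsOrthoProjective 𝕜 φ) {σ : 𝕜 →+* 𝕜} (he : ‖e‖ = 1)
    (hσ : ∀ (t : 𝕜) v, inner 𝕜 e v = 0 → chart 𝕜 φ e (t • v) = σ t • chart 𝕜 φ e v)
    {v w : E} (hv : inner 𝕜 e v = 0) (hw : inner 𝕜 e w = 0) :
    inner 𝕜 (chart 𝕜 φ e v) (chart 𝕜 φ e w) = σ (inner 𝕜 v w) := by
  rcases eq_or_ne (inner 𝕜 v w) 0 with h | h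
  · rw [h, map_zero, hφ.inner_chart_eq_zero he hv hw h]
  have hunit := (hφ.inner_chart_eq_neg_one_iff he hv (w := -(inner 𝕜 v w)⁻¹ • w)
    (by rw [inner_smul_right, hw, mul_zero])).2 (by rw [inner_smul_right]; field_simp)
  rw [hσ _ _ hw, inner_smul_right, map_neg, map_inv₀, neg_mul, neg_inj] at hunit
  exact ((inv_mul_eq_one₀ ((map_ne_zero σ).2 h)).1 hunit).symm

lemma map_conj_of_chart_smul (hφ : IsOrthoProjective 𝕜 φ) {σ : 𝕜 →+* 𝕜} (he : ‖e‖ = 1)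
    (hσ : ∀ (t : 𝕜) v, inner 𝕜 e v = 0 → chart 𝕜 φ e (t • v) = σ t • chart 𝕜 φ e v)
    {v : E} (hv : inner 𝕜 e v = 0) (hv1 : ‖v‖ = 1) (t : 𝕜) :
    σ (starRingEnd 𝕜 t) = starRingEnd 𝕜 (σ t) := by
  have hvv : inner 𝕜 v v = (1 : 𝕜) := by rw [inner_self_eq_norm_sq_to_K, hv1]; simp
  have h := hφ.inner_chart he hσ (v := t • v) (by rw [inner_smul_right, hv, mul_zero]) hv
  rw [hσ t v hv, inner_smul_left, inner_smul_left, hφ.inner_chart he hσ hv hv, hvv, map_one,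
    mul_one, mul_one] at h
  exact h.symm

end IsOrthoProjective

variable (𝕜) in
/-- The homogeneous extension of the chart of `φ` at the unit vector `e` to the whole space, where
`σ` is the action of the chart on scalars. -/
noncomputable def linearization (φ : E → F) (e : E) (σ : 𝕜 →+* 𝕜) (x : E) : F :=
  σ (inner 𝕜 e x) • unitImage 𝕜 φ e + chart 𝕜 φ e (x - inner 𝕜 e x • e)

lemma inner_sub_inner_smul_self {e : E} (he : ‖e‖ = 1) (x : E) :
    inner 𝕜 e (x - inner 𝕜 e x • e) = 0 := by
  rw [inner_sub_right, inner_smul_right, inner_self_eq_norm_sq_to_K, he]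
  simp

lemma inner_smul_add_smul_add {b x y : E} (hb : ‖b‖ = 1) (hx : inner 𝕜 b x = 0)
    (hy : inner 𝕜 b y = 0) (s t : 𝕜) :
    inner 𝕜 (s • b + x) (t • b + y) = starRingEnd 𝕜 s * t + inner 𝕜 x y := by
  simp only [inner_add_left, inner_add_right, inner_smul_left, inner_smul_right, hy,
    inner_eq_zero_symm.1 hx, inner_self_eq_norm_sq_to_K, hb]
  simp [mul_comm]

namespace IsOrthoProjective

variable {φ : E → F} {e : E} {σ : 𝕜 →+* 𝕜}

lemma inner_linearization (hφ : IsOrthoProjective 𝕜 φ) (he : ‖e‖ = 1)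
    (hσ : ∀ (t : 𝕜) v, inner 𝕜 e v = 0 → chart 𝕜 φ e (t • v) = σ t • chart 𝕜 φ e v)
    (hσ_conj : ∀ t, σ (starRingEnd 𝕜 t) = starRingEnd 𝕜 (σ t)) (x y : E) :
    inner 𝕜 (linearization 𝕜 φ e σ x) (linearization 𝕜 φ e σ y) = σ (inner 𝕜 x y) := by
  have hx := inner_sub_inner_smul_self (𝕜 := 𝕜) he x
  have hy := inner_sub_inner_smul_self (𝕜 := 𝕜) he y
  rw [linearization, linearization, inner_smul_add_smul_add (hφ.norm_unitImage he)
    (hφ.inner_unitImage_chart he hx) (hφ.inner_unitImage_chart he hy), hφ.inner_chart he hσ hx hy,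
    ← hσ_conj, ← map_mul, ← map_add, ← inner_smul_add_smul_add he hx hy, add_sub_cancel,
    add_sub_cancel]

lemma linearization_mem (hφ : IsOrthoProjective 𝕜 φ) (he : ‖e‖ = 1)
    (hσ : ∀ (t : 𝕜) v, inner 𝕜 e v = 0 → chart 𝕜 φ e (t • v) = σ t • chart 𝕜 φ e v) (x : E) :
    linearization 𝕜 φ e σ x ∈ 𝕜 ∙ φ x := by
  have hx := inner_sub_inner_smul_self (𝕜 := 𝕜) he x
  rw [linearization]
  set s := inner 𝕜 e x
  rcases eq_or_ne s 0 with hs | hs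
  · rw [hs] at hx ⊢
    simpa using hφ.chart_mem he hx
  have hsx : e + s⁻¹ • (x - s • e) = s⁻¹ • x := by
    rw [smul_sub, inv_smul_smul₀ hs, add_sub_cancel]
  have hfactor : σ s • unitImage 𝕜 φ e + chart 𝕜 φ e (x - s • e) =
      σ s • (unitImage 𝕜 φ e + chart 𝕜 φ e (s⁻¹ • (x - s • e))) := by
    rw [hσ _ _ hx, smul_add, smul_smul, map_inv₀, mul_inv_cancel₀ ((map_ne_zero σ).2 hs), one_smul]
  rw [hfactor, unitImage_add_chart, hsx]
  exact smul_mem _ _ (smul_mem _ _ (hφ.map_smul_mem _ _))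

theorem exists_semilinear_representative (hφ : IsOrthoProjective 𝕜 φ) {b : Fin 3 → E}
    (hb : Orthonormal 𝕜 b) :
    ∃ (σ : 𝕜 →+* 𝕜) (T : E → F), (∀ t, σ (starRingEnd 𝕜 t) = starRingEnd 𝕜 (σ t)) ∧
      (∀ x y, inner 𝕜 (T x) (T y) = σ (inner 𝕜 x y)) ∧ ∀ x, T x ∈ 𝕜 ∙ φ x := by
  have h₀₁ : inner 𝕜 (b 0) (b 1) = 0 := hb.2 (by decide)
  obtain ⟨σ, hσ⟩ := hφ.exists_ringHom_chart_smul (hb.1 0) h₀₁ (hb.2 (i := 0) (j := 2) (by decide))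
    (hb.2 (by decide)) (hb.1 1) (hb.1 2)
  have hσ_conj := hφ.map_conj_of_chart_smul (hb.1 0) hσ h₀₁ (hb.1 1)
  exact ⟨σ, linearization 𝕜 φ (b 0) σ, hσ_conj, hφ.inner_linearization (hb.1 0) hσ hσ_conj,
    hφ.linearization_mem (hb.1 0) hσ⟩

end IsOrthoProjective

section InnerMap

variable {σ : 𝕜 →+* 𝕜} {T : E → F}

lemma map_add_of_inner_map (hT : ∀ x y, inner 𝕜 (T x) (T y) = σ (inner 𝕜 x y)) (x y : E) :
    T (x + y) = T x + T y := by
  rw [← sub_eq_zero, ← inner_self_eq_zero (𝕜 := 𝕜)]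
  simp only [inner_sub_left, inner_sub_right, inner_add_left, inner_add_right, hT, map_add]
  ring

lemma map_smul_of_inner_map (hσ : ∀ t, σ (starRingEnd 𝕜 t) = starRingEnd 𝕜 (σ t))
    (hT : ∀ x y, inner 𝕜 (T x) (T y) = σ (inner 𝕜 x y)) (c : 𝕜) (x : E) :
    T (c • x) = σ c • T x := by
  rw [← sub_eq_zero, ← inner_self_eq_zero (𝕜 := 𝕜)]
  simp only [inner_sub_left, inner_sub_right, inner_smul_left, inner_smul_right, hT, map_mul, hσ]
  ring

lemma norm_map_of_inner_map [RingHomIsometric σ]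
    (hT : ∀ x y, inner 𝕜 (T x) (T y) = σ (inner 𝕜 x y)) (x : E) : ‖T x‖ = ‖x‖ := by
  have h := congrArg norm (hT x x)
  rw [RingHomIsometric.norm_map, inner_self_eq_norm_sq_to_K, inner_self_eq_norm_sq_to_K] at h
  simpa using h

end InnerMap

lemma IsOrthoProjective.exists_isometryEquiv {φ : E → F} (hφ : IsOrthoProjective 𝕜 φ)
    {σ : 𝕜 →+* 𝕜} [RingHomInvPair σ σ] [RingHomIsometric σ] {T : E → F}
    (hσ : ∀ t, σ (starRingEnd 𝕜 t) = starRingEnd 𝕜 (σ t))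
    (hT : ∀ x y, inner 𝕜 (T x) (T y) = σ (inner 𝕜 x y)) (hTφ : ∀ x, T x ∈ 𝕜 ∙ φ x) :
    ∃ U : E ≃ₛₗᵢ[σ] F, ∀ x, U x ∈ 𝕜 ∙ φ x := by
  let L : E →ₛₗᵢ[σ] F :=
    { toFun := T
      map_add' := map_add_of_inner_map hT
      map_smul' := map_smul_of_inner_map hσ hT
      norm_map' := norm_map_of_inner_map hT }
  have hφL (x : E) : φ x ∈ LinearMap.range L.toLinearMap := by
    obtain ⟨s, hs⟩ := mem_span_singleton.1 (hTφ x)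
    rcases eq_or_ne s 0 with rfl | hs0
    · have hx : x = 0 := by
        rw [← norm_eq_zero, ← norm_map_of_inner_map hT x, ← hs, zero_smul, norm_zero]
      rw [hφ.map_eq_zero_iff.2 hx]
      exact zero_mem _
    · rw [← inv_smul_smul₀ hs0 (φ x), hs]
      exact smul_mem _ _ ⟨x, rfl⟩
  refine ⟨LinearIsometryEquiv.ofSurjective L fun y => ?_, hTφ⟩
  obtain ⟨x, t, rfl⟩ := hφ.exists_smul_eq y
  exact smul_mem _ t (hφL x)

lemma ringHom_complex_eq_id_or_conj {σ : ℂ →+* ℂ}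
    (hσ : ∀ t, σ (starRingEnd ℂ t) = starRingEnd ℂ (σ t)) :
    σ = RingHom.id ℂ ∨ σ = starRingEnd ℂ := by
  have hreal (r : ℝ) : ((σ r).re : ℂ) = σ r := by
    rw [← Complex.conj_eq_iff_re, ← hσ, Complex.conj_ofReal]
  let τ : ℝ →+* ℝ :=
    { toFun r := (σ r).re
      map_one' := by simp
      map_zero' := by simp
      map_add' r s := by simp
      map_mul' r s := by rw [Complex.ofReal_mul, map_mul, ← hreal r, Complex.re_ofReal_mul]; simp }
  have hfix (r : ℝ) : σ r = r := by
    rw [← hreal r]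
    exact congrArg _ (DFunLike.congr_fun (Subsingleton.elim τ (RingHom.id ℝ)) r)
  rcases Complex.real_algHom_eq_id_or_conj ⟨σ, hfix⟩ with h | h
  · exact .inl (RingHom.ext fun z => DFunLike.congr_fun h z)
  · exact .inr (RingHom.ext fun z => DFunLike.congr_fun h z)

lemma exists_orthonormal_of_le_rank {n : ℕ} (h : n ≤ Module.rank 𝕜 E) :
    ∃ b : Fin n → E, Orthonormal 𝕜 b := by
  obtain ⟨s, hs, hli⟩ := exists_finset_linearIndependent_of_le_rank h
  exact ⟨_, InnerProductSpace.gramSchmidtNormed_orthonormal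
    (hli.comp _ (s.equivFinOfCardEq hs).symm.injective)⟩

theorem uhlhorn {E F : Type*} [NormedAddCommGroup E] [InnerProductSpace ℂ E]
    [NormedAddCommGroup F] [InnerProductSpace ℂ F] {φ : E → F} (hφ : IsOrthoProjective ℂ φ)
    (hE : 3 ≤ Module.rank ℂ E) :
    (∃ U : E ≃ₗᵢ[ℂ] F, ∀ x, U x ∈ ℂ ∙ φ x) ∨ ∃ U : E ≃ₗᵢ⋆[ℂ] F, ∀ x, U x ∈ ℂ ∙ φ x := by
  obtain ⟨b, hb⟩ := exists_orthonormal_of_le_rank (n := 3) hE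
  obtain ⟨σ, T, hσ, hT, hTφ⟩ := hφ.exists_semilinear_representative hb
  rcases ringHom_complex_eq_id_or_conj hσ with rfl | rfl
  · exact .inl (hφ.exists_isometryEquiv hσ hT hTφ)
  · exact .inr (hφ.exists_isometryEquiv hσ hT hTφ)

end Uhlhorn

section ModularLattice

variable {α : Type*} [Lattice α]

/-- Adjacency of two elements of a lattice: both cover their meet. For subspaces this says that the
intersection is a hyperplane in each of them. -/
def LatticeAdjacent (X Y : α) : Prop := X ⊓ Y ⋖ X ∧ X ⊓ Y ⋖ Y

lemma latticeAdjacent_of_covBy {A X Y : α} (hX : A ⋖ X) (hY : A ⋖ Y) (hne : X ≠ Y) :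
    LatticeAdjacent X Y := by
  rw [LatticeAdjacent, hX.wcovBy.inf_eq hY.wcovBy hne]
  exact ⟨hX, hY⟩

namespace LatticeAdjacent

lemma symm {X Y : α} (h : LatticeAdjacent X Y) : LatticeAdjacent Y X := by
  rw [LatticeAdjacent, inf_comm]
  exact And.symm h

lemma not_le {X Y : α} (h : LatticeAdjacent X Y) : ¬X ≤ Y := by
  simpa using h.1.lt

lemma ne {X Y : α} (h : LatticeAdjacent X Y) : X ≠ Y := fun e => h.not_le e.le

lemma inf_eq {A X Y : α} (h : LatticeAdjacent X Y) (hAX : A ⋖ X) (hAY : A ≤ Y) : X ⊓ Y = A :=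
  (hAX.eq_or_eq (le_inf hAX.le hAY) inf_le_left).resolve_right h.1.ne

lemma covBy_of_le {A X Y : α} (h : LatticeAdjacent X Y) (hAX : A ⋖ X) (hAY : A ≤ Y) : A ⋖ Y :=
  h.inf_eq hAX hAY ▸ h.2

lemma inf_le_or_le_sup {X Y Z : α} (hXY : LatticeAdjacent X Y) (hXZ : LatticeAdjacent X Z)
    (hYZ : LatticeAdjacent Y Z) : X ⊓ Y ≤ Z ∨ Z ≤ X ⊔ Y := by
  by_cases h : X ⊓ Z = Y ⊓ Z
  · left
    have hle : X ⊓ Z ≤ Y := h ▸ inf_le_left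
    exact hXY.inf_eq hXZ.1 hle ▸ inf_le_right
  · right
    rw [← hXZ.2.wcovBy.sup_eq hYZ.2.wcovBy h]
    exact sup_le_sup inf_le_left inf_le_left

variable [IsModularLattice α]

lemma covBy_sup_left {X Y : α} (h : LatticeAdjacent X Y) : X ⋖ X ⊔ Y :=
  covBy_sup_of_inf_covBy_right h.2

lemma covBy_sup_right {X Y : α} (h : LatticeAdjacent X Y) : Y ⋖ X ⊔ Y :=
  covBy_sup_of_inf_covBy_left h.1

lemma toDual {X Y : α} (h : LatticeAdjacent X Y) :
    LatticeAdjacent (OrderDual.toDual X) (OrderDual.toDual Y) :=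
  ⟨h.covBy_sup_left.toDual, h.covBy_sup_right.toDual⟩

lemma of_toDual {X Y : α} (h : LatticeAdjacent (OrderDual.toDual X) (OrderDual.toDual Y)) :
    LatticeAdjacent X Y :=
  h.toDual

lemma of_covBy_of_covBy {V X Y : α} (hX : X ⋖ V) (hY : Y ⋖ V) (hne : X ≠ Y) :
    LatticeAdjacent X Y :=
  of_toDual (latticeAdjacent_of_covBy hX.toDual hY.toDual hne)

lemma covBy_of_ge {V X Y : α} (h : LatticeAdjacent X Y) (hXV : X ⋖ V) (hYV : Y ≤ V) : Y ⋖ V :=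
  (h.toDual.covBy_of_le hXV.toDual hYV).ofDual

lemma sup_eq_sup_of_inf_ne_inf {X Y Z : α} (hXY : LatticeAdjacent X Y) (hXZ : LatticeAdjacent X Z)
    (hYZ : LatticeAdjacent Y Z) (hne : X ⊓ Y ≠ X ⊓ Z) : X ⊔ Y = X ⊔ Z := by
  have hle : Z ≤ X ⊔ Y := (hXY.inf_le_or_le_sup hXZ hYZ).resolve_left fun h =>
    hne (hXZ.inf_eq hXY.1 h).symm
  exact (hXY.covBy_sup_left.eq_or_eq le_sup_left (sup_le le_sup_left hle)).resolve_left
    hXZ.covBy_sup_left.ne' |>.symm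

end LatticeAdjacent

lemma pairwise_latticeAdjacent_inf_le_or_le_sup {S : Set α} (hS : S.Pairwise LatticeAdjacent)
    {X Y : α} (hX : X ∈ S) (hY : Y ∈ S) (hne : X ≠ Y) :
    (∀ Z ∈ S, X ⊓ Y ≤ Z) ∨ ∀ Z ∈ S, Z ≤ X ⊔ Y := by
  have hXY := hS hX hY hne
  have trichotomy {Z : α} (hZ : Z ∈ S) : X ⊓ Y ≤ Z ∨ Z ≤ X ⊔ Y := by
    rcases eq_or_ne X Z with rfl | hXZ
    · exact .inl inf_le_left
    rcases eq_or_ne Y Z with rfl | hYZ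
    · exact .inl inf_le_right
    exact hXY.inf_le_or_le_sup (hS hX hZ hXZ) (hS hY hZ hYZ)
  by_contra! ⟨⟨Z₁, hZ₁, hlow₁⟩, Z₂, hZ₂, hup₂⟩
  have hup₁ : Z₁ ≤ X ⊔ Y := (trichotomy hZ₁).resolve_left hlow₁
  have hlow₂ : X ⊓ Y ≤ Z₂ := (trichotomy hZ₂).resolve_right hup₂
  have hXZ₂ : LatticeAdjacent X Z₂ := hS hX hZ₂ fun e => hup₂ (e ▸ le_sup_left)
  have hcov₂ : X ⊓ Y ⋖ Z₂ := hXZ₂.covBy_of_le hXY.1 hlow₂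
  have hadj : LatticeAdjacent Z₁ Z₂ := hS hZ₁ hZ₂ fun e => hlow₁ (e ▸ hlow₂)
  have hinf : (X ⊔ Y) ⊓ Z₂ = X ⊓ Y :=
    (hcov₂.eq_or_eq (le_inf (inf_le_left.trans le_sup_left) hlow₂) inf_le_right).resolve_right
      fun e => hup₂ (inf_eq_right.1 e)
  have hle : Z₁ ⊓ Z₂ ≤ X ⊓ Y := hinf ▸ inf_le_inf_right Z₂ hup₁
  have heq : X ⊓ Y = Z₁ ⊓ Z₂ := (hadj.2.eq_or_eq hle hlow₂).resolve_right hcov₂.ne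
  exact hlow₁ (heq ▸ inf_le_left)

variable [IsModularLattice α]

lemma le_of_latticeAdjacent_three {W X₁ X₂ X₃ Y : α} (h₁ : W ⋖ X₁) (h₂ : W ⋖ X₂) (h₃ : W ⋖ X₃)
    (h₁₂ : X₁ ≠ X₂) (hX₃ : ¬X₃ ≤ X₁ ⊔ X₂) (hY₁ : Y = X₁ ∨ LatticeAdjacent Y X₁)
    (hY₂ : Y = X₂ ∨ LatticeAdjacent Y X₂) (hY₃ : Y = X₃ ∨ LatticeAdjacent Y X₃) : W ≤ Y := by
  obtain rfl | hY₁ := hY₁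
  · exact h₁.le
  obtain rfl | hY₂ := hY₂
  · exact h₂.le
  obtain rfl | hY₃ := hY₃
  · exact h₃.le
  have h₁₃ : X₁ ≠ X₃ := fun e => hX₃ (e ▸ le_sup_left)
  have hX₁₃ := latticeAdjacent_of_covBy h₁ h₃ h₁₃
  obtain h | hY₁₂ := (latticeAdjacent_of_covBy h₁ h₂ h₁₂).inf_le_or_le_sup hY₁.symm hY₂.symm
  · exact h₁.wcovBy.inf_eq h₂.wcovBy h₁₂ ▸ h
  obtain h | hY₁₃ := hX₁₃.inf_le_or_le_sup hY₁.symm hY₃.symm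
  · exact h₁.wcovBy.inf_eq h₃.wcovBy h₁₃ ▸ h
  have hX₁ : (X₁ ⊔ X₃) ⊓ (X₁ ⊔ X₂) = X₁ :=
    (hX₁₃.covBy_sup_left.eq_or_eq (le_inf le_sup_left le_sup_left) inf_le_left).resolve_right
      fun e => hX₃ (le_sup_right.trans (inf_eq_left.1 e))
  exact absurd (hX₁ ▸ le_inf hY₁₃ hY₁₂) hY₁.not_le

lemma latticeAdjacent_of_common_neighbours_of_inf_le {A B C X Z : α} (hAB : LatticeAdjacent A B)
    (hAC : LatticeAdjacent A C) (hle : A ⊓ B ≤ C) (hC : ¬C ≤ A ⊔ B)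
    (hX : LatticeAdjacent X A ∧ LatticeAdjacent X B ∧ LatticeAdjacent X C)
    (hZ : LatticeAdjacent Z A ∧ LatticeAdjacent Z B ∧ LatticeAdjacent Z C) (hne : X ≠ Z) :
    LatticeAdjacent X Z := by
  have hcov {Y : α} (hY : LatticeAdjacent Y A ∧ LatticeAdjacent Y B ∧ LatticeAdjacent Y C) :
      A ⊓ B ⋖ Y :=
    hY.1.symm.covBy_of_le hAB.1 <| le_of_latticeAdjacent_three hAB.1 hAB.2
      (hAC.covBy_of_le hAB.1 hle) hAB.ne hC (.inr hY.1) (.inr hY.2.1) (.inr hY.2.2)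
  exact latticeAdjacent_of_covBy (hcov hX) (hcov hZ) hne

lemma latticeAdjacent_of_common_neighbours {A B C X Z : α} (hAB : LatticeAdjacent A B)
    (hAC : LatticeAdjacent A C) (hBC : LatticeAdjacent B C) (hABC : ¬(A ⊓ B ≤ C ∧ C ≤ A ⊔ B))
    (hX : LatticeAdjacent X A ∧ LatticeAdjacent X B ∧ LatticeAdjacent X C)
    (hZ : LatticeAdjacent Z A ∧ LatticeAdjacent Z B ∧ LatticeAdjacent Z C) (hne : X ≠ Z) :
    LatticeAdjacent X Z := by
  by_cases hle : A ⊓ B ≤ C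
  · exact latticeAdjacent_of_common_neighbours_of_inf_le hAB hAC hle (fun h => hABC ⟨hle, h⟩)
      hX hZ hne
  · have hge := (hAB.inf_le_or_le_sup hAC hBC).resolve_left hle
    exact .of_toDual <| latticeAdjacent_of_common_neighbours_of_inf_le hAB.toDual hAC.toDual hge hle
      ⟨hX.1.toDual, hX.2.1.toDual, hX.2.2.toDual⟩ ⟨hZ.1.toDual, hZ.2.1.toDual, hZ.2.2.toDual⟩ hne

lemma pairwise_latticeAdjacent_covBy {S : Set α} (hS : S.Pairwise LatticeAdjacent) {X Y : α}
    (hX : X ∈ S) (hY : Y ∈ S) (hne : X ≠ Y) :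
    (∀ Z ∈ S, X ⊓ Y ⋖ Z) ∨ ∀ Z ∈ S, Z ⋖ X ⊔ Y := by
  have hXY := hS hX hY hne
  refine (pairwise_latticeAdjacent_inf_le_or_le_sup hS hX hY hne).imp
    (fun h Z hZ => ?_) (fun h Z hZ => ?_)
  · rcases eq_or_ne X Z with rfl | hXZ
    · exact hXY.1
    · exact (hS hX hZ hXZ).covBy_of_le hXY.1 (h Z hZ)
  · rcases eq_or_ne X Z with rfl | hXZ
    · exact hXY.covBy_sup_left
    · exact (hS hX hZ hXZ).covBy_of_ge hXY.covBy_sup_left (h Z hZ)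

end ModularLattice

section VectorSpace

variable {K V : Type*} [DivisionRing K] [AddCommGroup V] [Module K V] {W X : Submodule K V} {x : V}

lemma mem_sup_span_singleton_self (W : Submodule K V) (x : V) : x ∈ W ⊔ K ∙ x :=
  mem_sup_right (mem_span_singleton_self x)

lemma covBy_sup_span_singleton (hx : x ∉ W) : W ⋖ W ⊔ K ∙ x :=
  sup_comm (K ∙ x) W ▸ covBy_span_singleton_sup hx

lemma eq_sup_span_singleton_of_covBy (h : W ⋖ X) (hx : x ∈ X) (hxW : x ∉ W) : X = W ⊔ K ∙ x := by
  have hle : W ⊔ K ∙ x ≤ X := sup_le h.le ((span_singleton_le_iff_mem x X).2 hx)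
  exact ((h.eq_or_eq le_sup_left hle).resolve_left (covBy_sup_span_singleton hxW).ne').symm

lemma finiteDimensional_iff_of_covBy (h : W ⋖ X) :
    FiniteDimensional K W ↔ FiniteDimensional K X := by
  refine ⟨fun _ => ?_, fun _ => finiteDimensional_of_le h.le⟩
  obtain ⟨x, hx, hxW⟩ := SetLike.exists_of_lt h.lt
  rw [eq_sup_span_singleton_of_covBy h hx hxW]
  infer_instance

lemma LatticeAdjacent.sup_span_singleton (h : LatticeAdjacent W X) (hx : x ∉ W ⊔ X) :
    LatticeAdjacent (W ⊔ K ∙ x) (X ⊔ K ∙ x) := by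
  have hadj {Y : Submodule K V} (hY : Y ⋖ W ⊔ X) : LatticeAdjacent (W ⊔ X) (Y ⊔ K ∙ x) :=
    latticeAdjacent_of_covBy hY (covBy_sup_span_singleton fun h => hx (hY.le h))
      fun e => hx (e ▸ mem_sup_span_singleton_self Y x)
  have hcov {Y : Submodule K V} (hY : Y ⋖ W ⊔ X) : Y ⊔ K ∙ x ⋖ W ⊔ X ⊔ K ∙ x := by
    simpa only [← sup_assoc, sup_eq_left.2 hY.le] using (hadj hY).covBy_sup_right
  refine .of_covBy_of_covBy (hcov h.covBy_sup_left) (hcov h.covBy_sup_right) fun e => h.ne ?_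
  rw [← (hadj h.covBy_sup_left).inf_eq h.covBy_sup_left le_sup_left, e,
    (hadj h.covBy_sup_right).inf_eq h.covBy_sup_right le_sup_left]

end VectorSpace

section OrthogonalComplement

variable {𝕜 E : Type*} [RCLike 𝕜] [NormedAddCommGroup E] [InnerProductSpace 𝕜 E]
  {W X : Submodule 𝕜 E} {x y : E}

lemma isClosed_of_covBy (hW : IsClosed (W : Set E)) (h : W ⋖ X) : IsClosed (X : Set E) := by
  obtain ⟨x, hx, hxW⟩ := SetLike.exists_of_lt h.lt
  rw [eq_sup_span_singleton_of_covBy h hx hxW]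
  exact isClosed_sup_finiteDimensional W _ hW

lemma notMem_of_mem_orthogonal (hx : x ∈ Wᗮ) (hx₀ : x ≠ 0) : x ∉ W := fun h =>
  hx₀ ((mem_bot 𝕜).1 (W.orthogonal_disjoint.le_bot ⟨h, hx⟩))

lemma covBy_sup_span_singleton_of_mem_orthogonal (hx : x ∈ Wᗮ) (hx₀ : x ≠ 0) :
    W ⋖ W ⊔ 𝕜 ∙ x :=
  covBy_sup_span_singleton (notMem_of_mem_orthogonal hx hx₀)

lemma le_orthogonal_span_singleton_iff : W ≤ (𝕜 ∙ x)ᗮ ↔ x ∈ Wᗮ := by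
  rw [← isOrtho_iff_le, isOrtho_comm, isOrtho_iff_le, span_singleton_le_iff_mem]

lemma sup_span_singleton_inf_orthogonal (hx : x ∈ Wᗮ) : (W ⊔ 𝕜 ∙ x) ⊓ Wᗮ = 𝕜 ∙ x := by
  rw [sup_comm, sup_inf_assoc_of_le W ((span_singleton_le_iff_mem x _).2 hx), inf_orthogonal_eq_bot,
    sup_bot_eq]

lemma orthogonal_span_singleton_covBy_top (hx₀ : x ≠ 0) : (𝕜 ∙ x)ᗮ ⋖ ⊤ := by
  have hx : x ∉ (𝕜 ∙ x)ᗮ := fun h => notMem_of_mem_orthogonal h hx₀ (mem_span_singleton_self x)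
  have hsup : (𝕜 ∙ x)ᗮ ⊔ 𝕜 ∙ x = ⊤ := by rw [sup_comm, sup_orthogonal_of_hasOrthogonalProjection]
  exact hsup ▸ covBy_sup_span_singleton hx

lemma inf_orthogonal_span_singleton_covBy (hx : x ∉ Wᗮ) : W ⊓ (𝕜 ∙ x)ᗮ ⋖ W := by
  have hcov : (𝕜 ∙ x)ᗮ ⋖ ⊤ :=
    orthogonal_span_singleton_covBy_top (ne_of_mem_of_not_mem (zero_mem _) hx).symm
  have hsup : W ⊔ (𝕜 ∙ x)ᗮ = ⊤ := hcov.eq_or_eq le_sup_right le_top |>.resolve_left fun h =>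
    hx (le_orthogonal_span_singleton_iff.1 (h ▸ le_sup_left))
  exact inf_covBy_of_covBy_sup_right (hsup.symm ▸ hcov)

lemma exists_mem_inf_orthogonal_ne_zero (hX : ¬FiniteDimensional 𝕜 X) (N : Submodule 𝕜 E)
    [FiniteDimensional 𝕜 N] : ∃ y ∈ X ⊓ Nᗮ, y ≠ 0 := by
  by_contra! h
  refine hX (Module.Finite.of_injective ((N.orthogonalProjectionOnto : E →ₗ[𝕜] N).domRestrict X) ?_)
  refine LinearMap.ker_eq_bot.1 (LinearMap.ker_eq_bot'.2 fun x hx => Subtype.ext ?_)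
  exact h x ⟨x.2, orthogonalProjectionOnto_eq_zero_iff.1 hx⟩

variable [CompleteSpace E]

lemma hasOrthogonalProjection_of_isClosed (hW : IsClosed (W : Set E)) :
    W.HasOrthogonalProjection :=
  have := hW.completeSpace_coe
  inferInstance

lemma orthogonal_orthogonal_of_isClosed (hW : IsClosed (W : Set E)) : Wᗮᗮ = W :=
  have := hasOrthogonalProjection_of_isClosed hW
  orthogonal_orthogonal W

lemma exists_mem_orthogonal_ne_zero_of_lt (hW : IsClosed (W : Set E)) (h : W < X) :
    ∃ x ∈ X, x ∈ Wᗮ ∧ x ≠ 0 := by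
  have := hasOrthogonalProjection_of_isClosed hW
  have hne : Wᗮ ⊓ X ≠ ⊥ := fun hbot => by
    have hsup := sup_orthogonal_inf_of_hasOrthogonalProjection h.le
    rw [hbot, sup_bot_eq] at hsup
    exact h.ne hsup
  obtain ⟨x, ⟨hxW, hxX⟩, hx₀⟩ := exists_mem_ne_zero_of_ne_bot hne
  exact ⟨x, hxX, hxW, hx₀⟩

lemma orthogonal_covBy_orthogonal (hW : IsClosed (W : Set E)) (h : W ⋖ X) : Xᗮ ⋖ Wᗮ := by
  obtain ⟨x, hxX, hxW, hx₀⟩ := exists_mem_orthogonal_ne_zero_of_lt hW h.lt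
  rw [eq_sup_span_singleton_of_covBy h hxX (notMem_of_mem_orthogonal hxW hx₀), ← inf_orthogonal]
  exact inf_orthogonal_span_singleton_covBy fun h => notMem_of_mem_orthogonal h hx₀ hxW

end OrthogonalComplement

section Grassmannian

variable {X Y W : Submodule ℂ H}

lemma orthogonal_mem_Ginf (hX : X ∈ Ginf) : Xᗮ ∈ Ginf :=
  ⟨X.isClosed_orthogonal, hX.2.2, (orthogonal_orthogonal_of_isClosed hX.1).symm ▸ hX.2.1⟩

lemma mem_Ginf_iff_of_covBy (hW : IsClosed (W : Set H)) (h : W ⋖ X) : W ∈ Ginf ↔ X ∈ Ginf := by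
  simp only [Ginf, Set.mem_ofPred_eq, finiteDimensional_iff_of_covBy h, hW, isClosed_of_covBy hW h,
    finiteDimensional_iff_of_covBy (orthogonal_covBy_orthogonal hW h)]

lemma mem_Ginf_of_covBy (hW : W ∈ Ginf) (h : W ⋖ X) : X ∈ Ginf :=
  (mem_Ginf_iff_of_covBy hW.1 h).1 hW

lemma LatticeAdjacent.inf_mem_Ginf (h : LatticeAdjacent X Y) (hX : X ∈ Ginf) (hY : Y ∈ Ginf) :
    X ⊓ Y ∈ Ginf :=
  (mem_Ginf_iff_of_covBy (hX.1.inter hY.1) h.1).2 hX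

lemma LatticeAdjacent.sup_mem_Ginf (h : LatticeAdjacent X Y) (hX : X ∈ Ginf) : X ⊔ Y ∈ Ginf :=
  mem_Ginf_of_covBy hX h.covBy_sup_left

end Grassmannian

section CommutingProjections

variable {𝕜 E : Type*} [RCLike 𝕜] [NormedAddCommGroup E] [InnerProductSpace 𝕜 E]
  {U V : Submodule 𝕜 E} [U.HasOrthogonalProjection] [V.HasOrthogonalProjection]

lemma commute_starProjection_of_le (h : U ≤ V) : Commute U.starProjection V.starProjection := by
  have hUV : U.starProjection * V.starProjection = U.starProjection :=
    starProjection_comp_starProjection_of_le h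
  have hVU : V.starProjection * U.starProjection = U.starProjection :=
    ContinuousLinearMap.ext fun x => starProjection_eq_self_iff.2 (h (starProjection_apply_mem U x))
  exact hUV.trans hVU.symm

lemma commute_starProjection_of_isOrtho (h : U ⟂ V) :
    Commute U.starProjection V.starProjection :=
  h.starProjection_comp_starProjection.trans h.symm.starProjection_comp_starProjection.symm

lemma starProjection_sup_of_isOrtho [(U ⊔ V).HasOrthogonalProjection] (h : U ⟂ V) :
    (U ⊔ V).starProjection = U.starProjection + V.starProjection := by
  ext x
  have hU := starProjection_apply_mem U x
  have hV := starProjection_apply_mem V x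
  refine eq_starProjection_of_mem_orthogonal (add_mem_sup hU hV) ?_
  rw [← inf_orthogonal, add_apply]
  constructor
  · rw [← sub_sub]
    exact sub_mem (sub_starProjection_mem_orthogonal x) (h.symm hV)
  · rw [add_comm, ← sub_sub]
    exact sub_mem (sub_starProjection_mem_orthogonal x) (h hU)

lemma mem_orthogonal_of_commute_starProjection (h : Commute U.starProjection V.starProjection)
    {y : E} (hy : y ∈ V) (hy' : y ∈ (U ⊓ V)ᗮ) : y ∈ Uᗮ := by
  have hcomm : U.starProjection y = V.starProjection (U.starProjection y) := by
    conv_lhs => rw [← starProjection_eq_self_iff.2 hy]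
    exact DFunLike.congr_fun h.eq y
  have hmem : U.starProjection y ∈ U ⊓ V :=
    ⟨starProjection_apply_mem U y, hcomm ▸ starProjection_apply_mem V _⟩
  have hinner : inner 𝕜 (U.starProjection y) (U.starProjection y) = 0 := by
    rw [← inner_starProjection_left_eq_right, starProjection_eq_self_iff.2 hmem.1]
    exact hy' _ hmem
  exact (starProjection_apply_eq_zero_iff U).1 (inner_self_eq_zero.1 hinner)

end CommutingProjections

section CodimOne

variable {E : Type*} [NormedAddCommGroup E] [InnerProductSpace ℂ E] {X Y W : Submodule ℂ E}

lemma codimIn_one_iff_covBy : CodimIn W X 1 ↔ W ⋖ X := by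
  have hsimple (hle : W ≤ X) : W ⋖ X ↔ finrank ℂ (X ⧸ W.comap X.subtype) = 1 :=
    (covBy_iff_quot_is_simple hle).trans (isSimpleModule_iff_finrank_eq_one ..)
  refine ⟨fun h => (hsimple h.1).2 h.2.2, fun h => ?_⟩
  have hrank := (hsimple h.le).1 h
  exact ⟨h.le, Module.finite_of_finrank_eq_succ hrank, hrank⟩

lemma adjacent_iff_latticeAdjacent : Adjacent X Y ↔ LatticeAdjacent X Y :=
  and_congr codimIn_one_iff_covBy codimIn_one_iff_covBy

end CodimOne

lemma projCLM_eq_starProjection {X : Submodule ℂ H} (hX : IsClosed (X : Set H))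
    [X.HasOrthogonalProjection] : projCLM X = X.starProjection :=
  dif_pos hX

namespace OrthoAdjacent

variable {X Y Z W : Submodule ℂ H} {y : H}

lemma latticeAdjacent (h : OrthoAdjacent X Y) : LatticeAdjacent X Y :=
  adjacent_iff_latticeAdjacent.1 h.1

lemma mem_orthogonal (h : OrthoAdjacent X Y) (hX : IsClosed (X : Set H)) (hY : IsClosed (Y : Set H))
    (hy : y ∈ Y) (hy' : y ∈ (X ⊓ Y)ᗮ) : y ∈ Xᗮ := by
  have := hasOrthogonalProjection_of_isClosed hX
  have := hasOrthogonalProjection_of_isClosed hY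
  have hcomm := h.2
  rw [Compatible, projCLM_eq_starProjection hX, projCLM_eq_starProjection hY] at hcomm
  exact mem_orthogonal_of_commute_starProjection hcomm hy hy'

lemma sup_span_singleton (hW : IsClosed (W : Set H)) (hWX : W ⋖ X) (hy : y ∈ Xᗮ) (hy₀ : y ≠ 0) :
    OrthoAdjacent X (W ⊔ ℂ ∙ y) := by
  have hyX := notMem_of_mem_orthogonal hy hy₀
  have hcov : W ⋖ W ⊔ ℂ ∙ y := covBy_sup_span_singleton fun h => hyX (hWX.le h)
  have hne : X ≠ W ⊔ ℂ ∙ y := fun h => hyX (h ▸ mem_sup_span_singleton_self W y)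
  refine ⟨adjacent_iff_latticeAdjacent.2 (latticeAdjacent_of_covBy hWX hcov hne), ?_⟩
  have hX := isClosed_of_covBy hW hWX
  have hY := isClosed_of_covBy hW hcov
  have := hasOrthogonalProjection_of_isClosed hW
  have := hasOrthogonalProjection_of_isClosed hX
  have := hasOrthogonalProjection_of_isClosed hY
  have hyX' : X ⟂ ℂ ∙ y := le_orthogonal_span_singleton_iff.2 hy
  rw [Compatible, projCLM_eq_starProjection hX, projCLM_eq_starProjection hY,
    starProjection_sup_of_isOrtho (hyX'.mono_left hWX.le)]
  exact (commute_starProjection_of_le hWX.le).symm.add_right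
    (commute_starProjection_of_isOrtho hyX')

lemma inf_orthogonal_inf_eq (h : OrthoAdjacent X Y) (hX : IsClosed (X : Set H))
    (hY : IsClosed (Y : Set H)) : Y ⊓ (X ⊓ Y)ᗮ = (X ⊔ Y) ⊓ Xᗮ := by
  have hcov := h.latticeAdjacent.2
  obtain ⟨y, hy, hy', hy₀⟩ := exists_mem_orthogonal_ne_zero_of_lt (hX.inter hY) hcov.lt
  have hyX := h.mem_orthogonal hX hY hy hy'
  have hsup : X ⊔ Y = X ⊔ ℂ ∙ y := eq_sup_span_singleton_of_covBy h.latticeAdjacent.covBy_sup_left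
    (mem_sup_right hy) (notMem_of_mem_orthogonal hyX hy₀)
  rw [hsup, sup_span_singleton_inf_orthogonal hyX, ← sup_span_singleton_inf_orthogonal hy',
    ← eq_sup_span_singleton_of_covBy hcov hy (notMem_of_mem_orthogonal hy' hy₀)]

lemma orthogonal (h : OrthoAdjacent X Y) (hX : IsClosed (X : Set H)) (hY : IsClosed (Y : Set H)) :
    OrthoAdjacent Xᗮ Yᗮ := by
  have hadj := h.latticeAdjacent
  refine ⟨adjacent_iff_latticeAdjacent.2 ?_, ?_⟩
  · rw [LatticeAdjacent, inf_orthogonal]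
    exact ⟨orthogonal_covBy_orthogonal hX hadj.covBy_sup_left,
      orthogonal_covBy_orthogonal hY hadj.covBy_sup_right⟩
  · have := hasOrthogonalProjection_of_isClosed hX
    have := hasOrthogonalProjection_of_isClosed hY
    have hcomm := h.2
    rw [Compatible, projCLM_eq_starProjection hX, projCLM_eq_starProjection hY] at hcomm
    rw [Compatible, projCLM_eq_starProjection X.isClosed_orthogonal,
      projCLM_eq_starProjection Y.isClosed_orthogonal, starProjection_orthogonal',
      starProjection_orthogonal']
    exact (Commute.one_left _).sub_left ((Commute.one_right _).sub_right hcomm)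

lemma not_inf_le_and_le_sup (hXY : OrthoAdjacent X Y) (hX : IsClosed (X : Set H))
    (hY : IsClosed (Y : Set H)) (hZ : IsClosed (Z : Set H)) (hXZ : OrthoAdjacent X Z)
    (hYZ : OrthoAdjacent Y Z) : ¬(X ⊓ Y ≤ Z ∧ Z ≤ X ⊔ Y) := by
  rintro ⟨hinf, hsup⟩
  have hadj := hXY.latticeAdjacent
  have hXZ' := hXZ.latticeAdjacent.inf_eq hadj.1 hinf
  have hYZ' := hYZ.latticeAdjacent.inf_eq hadj.2 hinf
  have hcov := hXZ.latticeAdjacent.covBy_of_le hadj.1 hinf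
  obtain ⟨z, hzZ, hz, hz₀⟩ := exists_mem_orthogonal_ne_zero_of_lt (hX.inter hY) hcov.lt
  have hzX : z ∈ Xᗮ := hXZ.mem_orthogonal hX hZ hzZ (hXZ'.symm ▸ hz)
  have hzY : z ∈ Yᗮ := hYZ.mem_orthogonal hY hZ hzZ (hYZ'.symm ▸ hz)
  have hzXY : z ∈ (X ⊔ Y)ᗮ := inf_orthogonal X Y ▸ ⟨hzX, hzY⟩
  exact notMem_of_mem_orthogonal hzXY hz₀ (hsup hzZ)

end OrthoAdjacent

section CommonNeighbours

lemma exists_orthonormal_fin {𝕜 E : Type*} [RCLike 𝕜] [NormedAddCommGroup E]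
    [InnerProductSpace 𝕜 E] {K : Submodule 𝕜 E} (hK : ¬FiniteDimensional 𝕜 K) (n : ℕ) :
    ∃ y : Fin n → E, Orthonormal 𝕜 y ∧ ∀ i, y i ∈ K := by
  have hrank : (n : Cardinal) ≤ Module.rank 𝕜 K :=
    (Cardinal.natCast_le_aleph0).trans (not_lt.1 (mt Module.rank_lt_aleph0_iff.1 hK))
  obtain ⟨v, hv⟩ := exists_linearIndependent_of_le_rank hrank
  exact ⟨_, (InnerProductSpace.gramSchmidtNormed_orthonormal hv).comp_linearIsometry K.subtypeₗᵢ,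
    fun i => (InnerProductSpace.gramSchmidtNormed 𝕜 v i).2⟩

variable {W X Z : Submodule ℂ H}

lemma pairwise_orthoAdjacent_sup_span_singleton {ι : Type*} {y : ι → H}
    (hW : IsClosed (W : Set H)) (hy : Orthonormal ℂ y) (hyW : ∀ i, y i ∈ Wᗮ) :
    Pairwise (Function.onFun OrthoAdjacent fun i => W ⊔ ℂ ∙ y i) := fun i j hij => by
  refine .sup_span_singleton hW
    (covBy_sup_span_singleton_of_mem_orthogonal (hyW i) (hy.ne_zero i)) ?_ (hy.ne_zero j)
  rw [← inf_orthogonal]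
  exact ⟨hyW j, mem_orthogonal_singleton_iff_inner_right.2 (hy.2 hij)⟩

lemma exists_covBy_three (hW : W ∈ Ginf) :
    ∃ A B C : Submodule ℂ H, W ⋖ A ∧ W ⋖ B ∧ W ⋖ C ∧ A ≠ B ∧ ¬C ≤ A ⊔ B := by
  obtain ⟨y, hy, hyW⟩ := exists_orthonormal_fin hW.2.2 3
  have hcov i : W ⋖ W ⊔ ℂ ∙ y i :=
    covBy_sup_span_singleton_of_mem_orthogonal (hyW i) (hy.ne_zero i)
  have hclosed i := isClosed_of_covBy hW.1 (hcov i)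
  have hpair := pairwise_orthoAdjacent_sup_span_singleton hW.1 hy hyW
  have h₀₁ := hpair (show (0 : Fin 3) ≠ 1 by decide)
  have hnot := h₀₁.not_inf_le_and_le_sup (hclosed 0) (hclosed 1) (hclosed 2) (hpair (by decide))
    (hpair (by decide))
  refine ⟨_, _, _, hcov 0, hcov 1, hcov 2, h₀₁.latticeAdjacent.ne, fun hle => hnot ⟨?_, hle⟩⟩
  rw [(hcov 0).wcovBy.inf_eq (hcov 1).wcovBy h₀₁.latticeAdjacent.ne]
  exact (hcov 2).le

lemma LatticeAdjacent.exists_common_orthoAdjacent (h : LatticeAdjacent X Z) (hX : X ∈ Ginf)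
    (hZ : Z ∈ Ginf) : ∃ T : Fin 3 → Submodule ℂ H, (∀ i, T i ∈ Ginf) ∧
      Pairwise (Function.onFun OrthoAdjacent T) ∧
      ∀ i, OrthoAdjacent X (T i) ∧ OrthoAdjacent Z (T i) := by
  have hW := h.inf_mem_Ginf hX hZ
  obtain ⟨y, hy, hyV⟩ := exists_orthonormal_fin (h.sup_mem_Ginf hX).2.2 3
  have hyX i : y i ∈ Xᗮ := orthogonal_le le_sup_left (hyV i)
  have hyZ i : y i ∈ Zᗮ := orthogonal_le le_sup_right (hyV i)
  have hyW i : y i ∈ (X ⊓ Z)ᗮ := orthogonal_le inf_le_left (hyX i)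
  refine ⟨fun i => X ⊓ Z ⊔ ℂ ∙ y i, fun i => ?_,
    pairwise_orthoAdjacent_sup_span_singleton hW.1 hy hyW,
    fun i => ⟨.sup_span_singleton hW.1 h.1 (hyX i) (hy.ne_zero i),
      .sup_span_singleton hW.1 h.2 (hyZ i) (hy.ne_zero i)⟩⟩
  exact mem_Ginf_of_covBy hW
    (covBy_sup_span_singleton_of_mem_orthogonal (hyW i) (hy.ne_zero i))

lemma latticeAdjacent_of_common_orthoAdjacent (hne : X ≠ Z) {T : Fin 3 → Submodule ℂ H}
    (hT : ∀ i, T i ∈ Ginf) (hpair : Pairwise (Function.onFun OrthoAdjacent T))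
    (hXZ : ∀ i, OrthoAdjacent X (T i) ∧ OrthoAdjacent Z (T i)) : LatticeAdjacent X Z := by
  have h₀₁ : OrthoAdjacent (T 0) (T 1) := hpair (by decide)
  have h₀₂ : OrthoAdjacent (T 0) (T 2) := hpair (by decide)
  have h₁₂ : OrthoAdjacent (T 1) (T 2) := hpair (by decide)
  have hX i := (hXZ i).1.latticeAdjacent
  have hZ i := (hXZ i).2.latticeAdjacent
  exact latticeAdjacent_of_common_neighbours h₀₁.latticeAdjacent h₀₂.latticeAdjacent
    h₁₂.latticeAdjacent (h₀₁.not_inf_le_and_le_sup (hT 0).1 (hT 1).1 (hT 2).1 h₀₂ h₁₂)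
    ⟨hX 0, hX 1, hX 2⟩ ⟨hZ 0, hZ 1, hZ 2⟩ hne

end CommonNeighbours

section RelativeRank

variable {K V : Type*} [DivisionRing K] [AddCommGroup V] [Module K V] {A B C : Submodule K V}

/-- The codimension of `A` in `B`, as a cardinal, so that it is additive without finiteness
assumptions. It is meant for `A ≤ B`; in general it is the codimension of `A ⊓ B` in `B`. -/
noncomputable def relRank (A B : Submodule K V) : Cardinal :=
  Module.rank K (B ⧸ A.comap B.subtype)

lemma relRank_eq_rank_map_mkQ (hBC : B ≤ C) :
    relRank A B = Module.rank K ((B.comap C.subtype).map (A.comap C.subtype).mkQ) := by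
  let ι : (B ⧸ A.comap B.subtype) →ₗ[K] C ⧸ A.comap C.subtype :=
    mapQ _ _ (inclusion hBC) fun _ hx => hx
  have hι : LinearMap.ker ι = ⊥ := (ker_mapQ ..).trans (mkQ_map_self _)
  have hrange : LinearMap.range ι = (B.comap C.subtype).map (A.comap C.subtype).mkQ :=
    (range_mapQ ..).trans (by rw [range_inclusion])
  rw [← hrange]
  exact (LinearEquiv.ofInjective ι (LinearMap.ker_eq_bot.1 hι)).rank_eq

lemma relRank_add_relRank (hAB : A ≤ B) (hBC : B ≤ C) :
    relRank A B + relRank B C = relRank A C := by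
  rw [relRank_eq_rank_map_mkQ hBC, relRank, relRank,
    ← (quotientQuotientEquivQuotient _ _ (comap_mono hAB)).rank_eq, add_comm]
  exact rank_quotient_add_rank _

lemma relRank_inf_left (A B : Submodule K V) : relRank (A ⊓ B) A = relRank B (A ⊔ B) :=
  (LinearMap.quotientInfEquivSupQuotient A B).rank_eq

lemma relRank_self (A : Submodule K V) : relRank A A = 0 := by
  simp [relRank]

end RelativeRank

section Codimension

variable {E : Type*} [NormedAddCommGroup E] [InnerProductSpace ℂ E] {A B C : Submodule ℂ E}
  {m n : ℕ}

lemma codimIn_iff_relRank_eq : CodimIn A B n ↔ A ≤ B ∧ relRank A B = n := by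
  refine and_congr_right fun _ => ⟨fun ⟨_, h⟩ => h ▸ (finrank_eq_rank ..).symm, fun h => ?_⟩
  exact ⟨Module.rank_lt_aleph0_iff.1 (h.trans_lt Cardinal.natCast_lt_aleph0),
    finrank_eq_of_rank_eq h⟩

lemma exists_codimIn_iff : (∃ n, CodimIn A B n) ↔ A ≤ B ∧ relRank A B < Cardinal.aleph0 := by
  simp only [codimIn_iff_relRank_eq, exists_and_left, Cardinal.lt_aleph0]

namespace CodimIn

lemma refl (A : Submodule ℂ E) : CodimIn A A 0 :=
  codimIn_iff_relRank_eq.2 ⟨le_rfl, by simp [relRank_self]⟩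

lemma add (hAB : CodimIn A B m) (hBC : CodimIn B C n) : CodimIn A C (m + n) := by
  rw [codimIn_iff_relRank_eq] at *
  exact ⟨hAB.1.trans hBC.1, by rw [← relRank_add_relRank hAB.1 hBC.1, hAB.2, hBC.2, Nat.cast_add]⟩

lemma unique (hm : CodimIn A B m) (hn : CodimIn A B n) : m = n :=
  hm.2.2.symm.trans hn.2.2

lemma eq_of_zero (h : CodimIn A B 0) : A = B := by
  have := h.2.1
  have hsub := Module.finrank_zero_iff.1 h.2.2
  rw [Submodule.Quotient.subsingleton_iff] at hsub
  exact h.1.antisymm (comap_subtype_eq_top.1 hsub)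

lemma exists_left (h : CodimIn A C n) (hAB : A ≤ B) (hBC : B ≤ C) : ∃ k, CodimIn A B k := by
  rw [exists_codimIn_iff]
  have hfin := (exists_codimIn_iff.1 ⟨n, h⟩).2
  rw [← relRank_add_relRank hAB hBC, Cardinal.add_lt_aleph0_iff] at hfin
  exact ⟨hAB, hfin.1⟩

lemma exists_right (h : CodimIn A C n) (hAB : A ≤ B) (hBC : B ≤ C) : ∃ k, CodimIn B C k := by
  rw [exists_codimIn_iff]
  have hfin := (exists_codimIn_iff.1 ⟨n, h⟩).2
  rw [← relRank_add_relRank hAB hBC, Cardinal.add_lt_aleph0_iff] at hfin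
  exact ⟨hBC, hfin.2⟩

lemma exists_inf (h : CodimIn A C n) (hB : B ≤ C) : ∃ k, CodimIn (B ⊓ A) B k := by
  obtain ⟨k, hk⟩ := h.exists_left le_sup_right (sup_le hB h.1)
  rw [codimIn_iff_relRank_eq, ← relRank_inf_left] at hk
  exact ⟨k, codimIn_iff_relRank_eq.2 ⟨inf_le_left, hk.2⟩⟩

lemma of_covBy_left (h : CodimIn A C (n + 1)) (hAB : A ⋖ B) (hBC : B ≤ C) : CodimIn B C n := by
  obtain ⟨k, hk⟩ := h.exists_right hAB.le hBC
  have : n + 1 = 1 + k := h.unique ((codimIn_one_iff_covBy.2 hAB).add hk)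
  exact (by omega : k = n) ▸ hk

lemma of_covBy_right (h : CodimIn A C (n + 1)) (hAB : A ≤ B) (hBC : B ⋖ C) : CodimIn A B n := by
  obtain ⟨k, hk⟩ := h.exists_left hAB hBC.le
  have : n + 1 = k + 1 := h.unique (hk.add (codimIn_one_iff_covBy.2 hBC))
  exact (by omega : k = n) ▸ hk

end CodimIn

namespace SameFinCodim

variable {W W' X Y Z K : Submodule ℂ E}

lemma exists_le_codimIn_inf (hX : CodimIn K X n) (hY : CodimIn K Y n) :
    ∃ k ≤ n, CodimIn (X ⊓ Y) X k ∧ CodimIn (X ⊓ Y) Y k := by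
  have hK : K ≤ X ⊓ Y := le_inf hX.1 hY.1
  obtain ⟨k, hk⟩ := hX.exists_left hK inf_le_left
  obtain ⟨i, hi⟩ := hX.exists_right hK inf_le_left
  obtain ⟨j, hj⟩ := hY.exists_right hK inf_le_right
  have hki : n = k + i := hX.unique (hk.add hi)
  have hkj : n = k + j := hY.unique (hk.add hj)
  exact ⟨i, by omega, hi, (by omega : i = j) ▸ hj⟩

lemma of_codimIn (hX : CodimIn K X n) (hY : CodimIn K Y n) : SameFinCodim X Y :=
  (exists_le_codimIn_inf hX hY).imp fun _ h => h.2

lemma refl (X : Submodule ℂ E) : SameFinCodim X X := .of_codimIn (.refl X) (.refl X)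

lemma symm : SameFinCodim X Y → SameFinCodim Y X := fun ⟨_, hX, hY⟩ => .of_codimIn hY hX

lemma trans : SameFinCodim X Y → SameFinCodim Y Z → SameFinCodim X Z := by
  rintro ⟨m, hX, hY⟩ ⟨n, hY', hZ⟩
  obtain ⟨k, hk⟩ := hY.exists_inf hY'.1
  obtain ⟨j, hj⟩ := hY'.exists_inf hY.1
  rw [inf_comm] at hj
  have hjk : j + m = k + n := (hj.add hY).unique (hk.add hY')
  exact .of_codimIn (hj.add hX) (hjk ▸ hk.add hZ)

lemma of_covBy (hX : W ⋖ X) (hY : W ⋖ Y) : SameFinCodim X Y :=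
  .of_codimIn (codimIn_one_iff_covBy.2 hX) (codimIn_one_iff_covBy.2 hY)

lemma covBy_up (h : SameFinCodim W W') (hX : W ⋖ X) (hY : W' ⋖ Y) : SameFinCodim X Y :=
  let ⟨_, hW, hW'⟩ := h
  .of_codimIn (hW.add (codimIn_one_iff_covBy.2 hX)) (hW'.add (codimIn_one_iff_covBy.2 hY))

lemma covBy_down (h : SameFinCodim X Y) (hX : W ⋖ X) (hY : W' ⋖ Y) : SameFinCodim W W' := by
  obtain ⟨n, hnX, hnY⟩ := h
  have hWX := codimIn_one_iff_covBy.2 hX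
  have hWY := codimIn_one_iff_covBy.2 hY
  obtain ⟨i, hi⟩ := hWX.exists_inf hnX.1
  obtain ⟨j, hj⟩ := hWY.exists_inf (hi.1.trans hnY.1)
  have hle : X ⊓ Y ⊓ W ⊓ W' ≤ W := inf_le_left.trans inf_le_right
  obtain ⟨k, hk⟩ := (hj.add (hi.add hnX)).exists_left hle hX.le
  obtain ⟨l, hl⟩ := (hj.add (hi.add hnY)).exists_left inf_le_right hY.le
  have hkX := (hj.add (hi.add hnX)).unique (hk.add hWX)
  have hlY := (hj.add (hi.add hnY)).unique (hl.add hWY)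
  exact .of_codimIn hk ((by omega : k = l) ▸ hl)

end SameFinCodim

end Codimension

section Connectedness

variable {X Y N : Submodule ℂ H}

lemma exists_sameFinCodim_le_orthogonal_sup (hX : X ∈ Ginf) [FiniteDimensional ℂ N] (hXN : X ≤ Nᗮ)
    (c : H) : ∃ Y ∈ Ginf, SameFinCodim X Y ∧ Y ≤ ((ℂ ∙ c) ⊔ N)ᗮ := by
  by_cases hc : c ∈ Xᗮ
  · refine ⟨X, hX, .refl X, ?_⟩
    rw [← inf_orthogonal]
    exact le_inf (le_orthogonal_span_singleton_iff.2 hc) hXN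
  · obtain ⟨y, ⟨hyX, hyN⟩, hy₀⟩ := exists_mem_inf_orthogonal_ne_zero hX.2.2 ((ℂ ∙ c) ⊔ N)
    have hcov := inf_orthogonal_span_singleton_covBy hc
    have hclosed : IsClosed ((X ⊓ (ℂ ∙ c)ᗮ : Submodule ℂ H) : Set H) :=
      hX.1.inter (isClosed_orthogonal _)
    have hcov' : X ⊓ (ℂ ∙ c)ᗮ ⋖ X ⊓ (ℂ ∙ c)ᗮ ⊔ ℂ ∙ y :=
      covBy_sup_span_singleton fun h => notMem_of_mem_orthogonal hyX hy₀ h.1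
    refine ⟨_, (mem_Ginf_iff_of_covBy hclosed hcov').1 ((mem_Ginf_iff_of_covBy hclosed hcov).2 hX),
      .of_covBy hcov hcov', sup_le ?_ ((span_singleton_le_iff_mem y _).2 hyN)⟩
    rw [← inf_orthogonal]
    exact le_inf inf_le_right (inf_le_left.trans hXN)

lemma exists_sameFinCodim_le_orthogonal (hX : X ∈ Ginf) (N : Submodule ℂ H)
    [hN : FiniteDimensional ℂ N] : ∃ Y ∈ Ginf, SameFinCodim X Y ∧ Y ≤ Nᗮ := by
  obtain ⟨s, rfl⟩ := Submodule.fg_iff_finiteDimensional N |>.2 hN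
  clear hN
  induction s using Finset.induction_on with
  | empty => exact ⟨X, hX, .refl X, by simp⟩
  | insert c s _ ih =>
    obtain ⟨Y, hY, hXY, hYs⟩ := ih
    obtain ⟨Z, hZ, hYZ, hZs⟩ := exists_sameFinCodim_le_orthogonal_sup hY hYs c
    rw [Finset.coe_insert, span_insert]
    exact ⟨Z, hZ, hXY.trans hYZ, hZs⟩

lemma exists_latticeAdjacent_of_codimIn_succ {n : ℕ} (hX : IsClosed (X : Set H))
    (hY : IsClosed (Y : Set H)) (hXn : CodimIn (X ⊓ Y) X (n + 1))
    (hYn : CodimIn (X ⊓ Y) Y (n + 1)) :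
    ∃ Z : Submodule ℂ H, IsClosed (Z : Set H) ∧ Z ≤ X ⊔ Y ∧ LatticeAdjacent X Z ∧
      ∃ k ≤ n, CodimIn (Z ⊓ Y) Z k ∧ CodimIn (Z ⊓ Y) Y k := by
  have hlt {V : Submodule ℂ H} (h : CodimIn (X ⊓ Y) V (n + 1)) : X ⊓ Y < V :=
    h.1.lt_of_ne fun e => by
      subst e
      simpa using h.unique (.refl _)
  obtain ⟨a, haX, ha, ha₀⟩ := exists_mem_orthogonal_ne_zero_of_lt (hX.inter hY) (hlt hXn)
  obtain ⟨b, hbY, hb⟩ := SetLike.exists_of_lt (hlt hYn)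
  have hbX : b ∉ X := fun h => hb ⟨h, hbY⟩
  set L := X ⊓ (ℂ ∙ a)ᗮ
  have hLX : L ⋖ X :=
    inf_orthogonal_span_singleton_covBy fun h => notMem_of_mem_orthogonal h ha₀ haX
  have hLZ : L ⋖ L ⊔ ℂ ∙ b := covBy_sup_span_singleton fun h => hbX h.1
  have hbZ := mem_sup_span_singleton_self L b
  have hKL : X ⊓ Y ≤ L := le_inf inf_le_left (le_orthogonal_span_singleton_iff.2 ha)
  have hK : X ⊓ Y ⋖ X ⊓ Y ⊔ ℂ ∙ b := covBy_sup_span_singleton hb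
  have hKZ : CodimIn (X ⊓ Y) (L ⊔ ℂ ∙ b) (n + 1) :=
    (hXn.of_covBy_right hKL hLX).add (codimIn_one_iff_covBy.2 hLZ)
  refine ⟨L ⊔ ℂ ∙ b, isClosed_of_covBy (hX.inter (isClosed_orthogonal _)) hLZ,
    sup_le_sup hLX.le ((span_singleton_le_iff_mem b Y).2 hbY),
    latticeAdjacent_of_covBy hLX hLZ fun h => hbX (h ▸ hbZ), SameFinCodim.exists_le_codimIn_inf
      (hKZ.of_covBy_left hK (sup_le_sup_right hKL _)) (hYn.of_covBy_left hK ?_)⟩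
  exact sup_le inf_le_right ((span_singleton_le_iff_mem b Y).2 hbY)

lemma SameFinCodim.induction_latticeAdjacent (N : Submodule ℂ H) {p : Submodule ℂ H → Prop}
    (step : ∀ X ∈ Ginf, ∀ Y ∈ Ginf, X ≤ Nᗮ → Y ≤ Nᗮ → LatticeAdjacent X Y → p X → p Y)
    (h : SameFinCodim X Y) (hX : X ∈ Ginf) (hY : Y ∈ Ginf) (hXN : X ≤ Nᗮ) (hYN : Y ≤ Nᗮ)
    (hpX : p X) : p Y := by
  obtain ⟨n, hXn, hYn⟩ := h
  induction n using Nat.strong_induction_on generalizing X with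
  | _ n ih =>
  obtain _ | n := n
  · rwa [← hYn.eq_of_zero, hXn.eq_of_zero]
  · obtain ⟨Z, hZ, hZXY, hXZ, k, hk, hZk, hYk⟩ :=
      exists_latticeAdjacent_of_codimIn_succ hX.1 hY.1 hXn hYn
    have hZG : Z ∈ Ginf := (mem_Ginf_iff_of_covBy (hX.1.inter hZ) hXZ.2).1
      ((mem_Ginf_iff_of_covBy (hX.1.inter hZ) hXZ.1).2 hX)
    have hZN := hZXY.trans (sup_le hXN hYN)
    exact ih k (Nat.lt_succ_of_le hk) hZG hZN (step X hX Z hZG hXN hZN hXZ hpX) hZk hYk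

end Connectedness

section Automorphisms

/-- `f` and `g` restrict to mutually inverse transformations of `G_∞(H)` that both preserve
ortho-adjacency. Their values outside `G_∞(H)` are irrelevant. -/
structure OrthoAdjacencyAut (f g : Submodule ℂ H → Submodule ℂ H) : Prop where
  mapsTo : Set.MapsTo f Ginf Ginf
  mapsTo_inv : Set.MapsTo g Ginf Ginf
  leftInvOn : Set.LeftInvOn g f Ginf
  rightInvOn : Set.RightInvOn g f Ginf
  orthoAdjacent : ∀ ⦃X⦄, X ∈ Ginf → ∀ ⦃Y⦄, Y ∈ Ginf → OrthoAdjacent X Y → OrthoAdjacent (f X) (f Y)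
  orthoAdjacent_inv :
    ∀ ⦃X⦄, X ∈ Ginf → ∀ ⦃Y⦄, Y ∈ Ginf → OrthoAdjacent X Y → OrthoAdjacent (g X) (g Y)

namespace OrthoAdjacencyAut

variable {f g : Submodule ℂ H → Submodule ℂ H} {X Y : Submodule ℂ H}

lemma of_bijOn (hbij : Set.BijOn f Ginf Ginf)
    (hf : ∀ X ∈ Ginf, ∀ Y ∈ Ginf, OrthoAdjacent X Y ↔ OrthoAdjacent (f X) (f Y)) :
    OrthoAdjacencyAut f (Function.invFunOn f Ginf) where
  mapsTo := hbij.mapsTo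
  mapsTo_inv := hbij.surjOn.mapsTo_invFunOn
  leftInvOn := hbij.invOn_invFunOn.1
  rightInvOn := hbij.invOn_invFunOn.2
  orthoAdjacent X hX Y hY := (hf X hX Y hY).1
  orthoAdjacent_inv X hX Y hY hXY := by
    have hmaps := hbij.surjOn.mapsTo_invFunOn
    rwa [hf _ (hmaps hX) _ (hmaps hY), hbij.invOn_invFunOn.2 hX, hbij.invOn_invFunOn.2 hY]

lemma symm (h : OrthoAdjacencyAut f g) : OrthoAdjacencyAut g f :=
  ⟨h.mapsTo_inv, h.mapsTo, h.rightInvOn, h.leftInvOn, h.orthoAdjacent_inv, h.orthoAdjacent⟩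

lemma orthogonal (h : OrthoAdjacencyAut f g) :
    OrthoAdjacencyAut (fun X => (f X)ᗮ) fun X => g Xᗮ where
  mapsTo _ hX := orthogonal_mem_Ginf (h.mapsTo hX)
  mapsTo_inv _ hX := h.mapsTo_inv (orthogonal_mem_Ginf hX)
  leftInvOn X hX := by
    simp only [orthogonal_orthogonal_of_isClosed (h.mapsTo hX).1, h.leftInvOn hX]
  rightInvOn X hX := by
    simp only [h.rightInvOn (orthogonal_mem_Ginf hX), orthogonal_orthogonal_of_isClosed hX.1]
  orthoAdjacent _ hX _ hY hXY :=
    (h.orthoAdjacent hX hY hXY).orthogonal (h.mapsTo hX).1 (h.mapsTo hY).1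
  orthoAdjacent_inv _ hX _ hY hXY := h.orthoAdjacent_inv (orthogonal_mem_Ginf hX)
    (orthogonal_mem_Ginf hY) (hXY.orthogonal hX.1 hY.1)

lemma latticeAdjacent (h : OrthoAdjacencyAut f g) (hX : X ∈ Ginf) (hY : Y ∈ Ginf)
    (hXY : LatticeAdjacent X Y) : LatticeAdjacent (f X) (f Y) := by
  obtain ⟨T, hT, hpair, hXYT⟩ := hXY.exists_common_orthoAdjacent hX hY
  exact latticeAdjacent_of_common_orthoAdjacent (h.leftInvOn.injOn.ne hX hY hXY.ne)
    (fun i => h.mapsTo (hT i)) (fun i j hij => h.orthoAdjacent (hT i) (hT j) (hpair hij))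
    fun i => ⟨h.orthoAdjacent hX (hT i) (hXYT i).1, h.orthoAdjacent hY (hT i) (hXYT i).2⟩

lemma latticeAdjacent_iff (h : OrthoAdjacencyAut f g) (hX : X ∈ Ginf) (hY : Y ∈ Ginf) :
    LatticeAdjacent (f X) (f Y) ↔ LatticeAdjacent X Y := by
  refine ⟨fun hXY => ?_, h.latticeAdjacent hX hY⟩
  simpa only [h.leftInvOn hX, h.leftInvOn hY] using
    h.symm.latticeAdjacent (h.mapsTo hX) (h.mapsTo hY) hXY

lemma sameFinCodim (h : OrthoAdjacencyAut f g) (hX : X ∈ Ginf) (hY : Y ∈ Ginf)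
    (hXY : SameFinCodim X Y) : SameFinCodim (f X) (f Y) := by
  refine hXY.induction_latticeAdjacent ⊥ (p := fun Y => SameFinCodim (f X) (f Y))
    (fun Y hY Z hZ _ _ hYZ ih => ?_) hX hY (by simp) (by simp) (.refl _)
  have hadj := h.latticeAdjacent hY hZ hYZ
  exact ih.trans (.of_covBy hadj.1 hadj.2)

end OrthoAdjacencyAut

end Automorphisms

section Stars

variable {f g : Submodule ℂ H → Submodule ℂ H} {W W' W₀ A A' B X Y : Submodule ℂ H}

/-- `f` maps the star of `W`, the set of subspaces containing `W` as a hyperplane, into the star of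
the closed subspace `A`. -/
def MapsStarTo (f : Submodule ℂ H → Submodule ℂ H) (W A : Submodule ℂ H) : Prop :=
  IsClosed (A : Set H) ∧ ∀ X, W ⋖ X → A ⋖ f X

lemma OrthoAdjacencyAut.covBy_of_forall_eq_or_latticeAdjacent (h : OrthoAdjacencyAut f g)
    (hW : W ∈ Ginf) (hY : Y ∈ Ginf)
    (hstar : ∀ X, W ⋖ X → f Y = f X ∨ LatticeAdjacent (f Y) (f X)) : W ⋖ Y := by
  have hadj {X : Submodule ℂ H} (hX : W ⋖ X) : Y = X ∨ LatticeAdjacent Y X :=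
    have hXG := mem_Ginf_of_covBy hW hX
    (hstar X hX).imp (h.leftInvOn.injOn hY hXG) (h.latticeAdjacent_iff hY hXG).1
  obtain ⟨X₁, X₂, X₃, h₁, h₂, h₃, h₁₂, hX₃⟩ := exists_covBy_three hW
  have hle := le_of_latticeAdjacent_three h₁ h₂ h₃ h₁₂ hX₃ (hadj h₁) (hadj h₂) (hadj h₃)
  obtain rfl | hY₁ := hadj h₁
  · exact h₁
  · exact hY₁.symm.covBy_of_le h₁ hle

lemma OrthoAdjacencyAut.exists_mapsStarTo_or (h : OrthoAdjacencyAut f g) (hW : W ∈ Ginf) :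
    (∃ A, MapsStarTo f W A) ∨ ∃ B, MapsStarTo (fun X => (f X)ᗮ) W B := by
  obtain ⟨X₁, X₂, -, h₁, h₂, -, h₁₂, -⟩ := exists_covBy_three hW
  have hG {X : Submodule ℂ H} (hX : W ⋖ X) : X ∈ Ginf := mem_Ginf_of_covBy hW hX
  have hclosed {X : Submodule ℂ H} (hX : W ⋖ X) : IsClosed (f X : Set H) := (h.mapsTo (hG hX)).1
  have hpair : (f '' {X | W ⋖ X}).Pairwise LatticeAdjacent := by
    rintro _ ⟨X, hX, rfl⟩ _ ⟨Y, hY, rfl⟩ hne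
    exact h.latticeAdjacent (hG hX) (hG hY)
      (latticeAdjacent_of_covBy hX hY fun e => hne (congrArg f e))
  have hne : f X₁ ≠ f X₂ := h.leftInvOn.injOn.ne (hG h₁) (hG h₂) h₁₂
  refine (pairwise_latticeAdjacent_covBy hpair ⟨X₁, h₁, rfl⟩ ⟨X₂, h₂, rfl⟩ hne).imp
    (fun hcov => ?_) (fun hcov => ?_)
  · exact ⟨f X₁ ⊓ f X₂, (hclosed h₁).inter (hclosed h₂), fun X hX => hcov _ ⟨X, hX, rfl⟩⟩
  · exact ⟨(f X₁ ⊔ f X₂)ᗮ, isClosed_orthogonal _,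
      fun X hX => orthogonal_covBy_orthogonal (hclosed hX) (hcov _ ⟨X, hX, rfl⟩)⟩

namespace MapsStarTo

lemma mem_Ginf (hA : MapsStarTo f W A) (h : OrthoAdjacencyAut f g) (hW : W ∈ Ginf) : A ∈ Ginf := by
  obtain ⟨X, -, -, hX, -⟩ := exists_covBy_three hW
  exact (mem_Ginf_iff_of_covBy hA.1 (hA.2 X hX)).2 (h.mapsTo (mem_Ginf_of_covBy hW hX))

lemma covBy_of_covBy (hA : MapsStarTo f W A) (h : OrthoAdjacencyAut f g) (hW : W ∈ Ginf)
    (hY : Y ∈ Ginf) (hAY : A ⋖ f Y) : W ⋖ Y :=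
  h.covBy_of_forall_eq_or_latticeAdjacent hW hY fun X hX =>
    or_iff_not_imp_left.2 (latticeAdjacent_of_covBy hAY (hA.2 X hX))

lemma symm (hA : MapsStarTo f W A) (h : OrthoAdjacencyAut f g) (hW : W ∈ Ginf) :
    MapsStarTo g A W := by
  refine ⟨hW.1, fun Y hY => ?_⟩
  have hYG := mem_Ginf_of_covBy (hA.mem_Ginf h hW) hY
  exact hA.covBy_of_covBy h hW (h.mapsTo_inv hYG) ((h.rightInvOn hYG).symm ▸ hY)

lemma unique (hA : MapsStarTo f W A) (hA' : MapsStarTo f W A') (h : OrthoAdjacencyAut f g)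
    (hW : W ∈ Ginf) : A = A' := by
  obtain ⟨X, Y, -, hX, hY, -, hXY, -⟩ := exists_covBy_three hW
  have hne := h.leftInvOn.injOn.ne (mem_Ginf_of_covBy hW hX) (mem_Ginf_of_covBy hW hY) hXY
  rw [← (hA.2 X hX).wcovBy.inf_eq (hA.2 Y hY).wcovBy hne,
    (hA'.2 X hX).wcovBy.inf_eq (hA'.2 Y hY).wcovBy hne]

lemma sameFinCodim (hA : MapsStarTo f W A) (hA' : MapsStarTo f W' A') (h : OrthoAdjacencyAut f g)
    (hW : W ∈ Ginf) (hW' : W' ∈ Ginf) (hWW' : SameFinCodim W W') : SameFinCodim A A' := by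
  obtain ⟨X, -, -, hX, -⟩ := exists_covBy_three hW
  obtain ⟨Y, -, -, hY, -⟩ := exists_covBy_three hW'
  exact (h.sameFinCodim (mem_Ginf_of_covBy hW hX) (mem_Ginf_of_covBy hW' hY)
    (hWW'.covBy_up hX hY)).covBy_down (hA.2 X hX) (hA'.2 Y hY)

-- If `A ⋖ f X ⋖ Bᗮ`, any further subspace `Z` strictly between `A` and `Bᗮ` would pull back to a
-- subspace containing both `W` and `W'`, hence to `X` itself.
lemma not_mapsStarTo_orthogonal (hA : MapsStarTo f W A) (h : OrthoAdjacencyAut f g) (hW : W ∈ Ginf)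
    (hW' : W' ∈ Ginf) (hWW' : LatticeAdjacent W W') : ¬MapsStarTo (fun X => (f X)ᗮ) W' B := by
  intro hB
  set X := W ⊔ W'
  have hfX : f X ∈ Ginf := h.mapsTo (hWW'.sup_mem_Ginf hW)
  have hAX := hA.2 X hWW'.covBy_sup_left
  have hXB : f X ⋖ Bᗮ := by
    simpa only [orthogonal_orthogonal_of_isClosed hfX.1] using
      orthogonal_covBy_orthogonal hB.1 (hB.2 X hWW'.covBy_sup_right)
  obtain ⟨v, hvB, hvX⟩ := SetLike.exists_of_lt hXB.lt
  set Z := A ⊔ ℂ ∙ v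
  have hAZ : A ⋖ Z := covBy_sup_span_singleton fun hv => hvX (hAX.le hv)
  have hne : f X ≠ Z := fun e => hvX (e ▸ mem_sup_span_singleton_self A v)
  have hZ : Z ∈ Ginf := mem_Ginf_of_covBy (hA.mem_Ginf h hW) hAZ
  have hZB : Z ⋖ Bᗮ := (latticeAdjacent_of_covBy hAX hAZ hne).covBy_of_ge hXB
    (sup_le (hAX.le.trans hXB.le) ((span_singleton_le_iff_mem v _).2 hvB))
  have hBZ : B ⋖ Zᗮ := by
    simpa only [orthogonal_orthogonal_of_isClosed hB.1] using orthogonal_covBy_orthogonal hZ.1 hZB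
  have hfgZ := h.rightInvOn hZ
  have hWZ : W ⋖ g Z := hA.covBy_of_covBy h hW (h.mapsTo_inv hZ) (hfgZ.symm ▸ hAZ)
  have hW'Z : W' ⋖ g Z := hB.covBy_of_covBy h.orthogonal hW' (h.mapsTo_inv hZ) (hfgZ.symm ▸ hBZ)
  have hXZ : X = g Z := (hWZ.eq_or_eq le_sup_left (sup_le hWZ.le hW'Z.le)).resolve_left
    hWW'.covBy_sup_left.ne'
  exact hne (hXZ ▸ hfgZ)

end MapsStarTo

/-- The subspaces in `G_∞(H)` whose intersection with `W₀` has the same finite codimension in both: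
the `A`-component of `W₀` when `W₀ ∈ G_∞(H)`. -/
def finCodimClass (W₀ : Submodule ℂ H) : Set (Submodule ℂ H) :=
  {W | W ∈ Ginf ∧ SameFinCodim W₀ W}

lemma exists_mem_finCodimClass_le_orthogonal (hW₀ : W₀ ∈ Ginf) (N : Submodule ℂ H)
    [FiniteDimensional ℂ N] : ∃ W ∈ finCodimClass W₀, W ≤ Nᗮ := by
  obtain ⟨W, hW, hWW₀, hWN⟩ := exists_sameFinCodim_le_orthogonal hW₀ N
  exact ⟨W, ⟨hW, hWW₀⟩, hWN⟩

lemma mem_finCodimClass_of_covBy (hW : W ∈ finCodimClass W₀) (hWX : W ⋖ X)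
    (hW' : IsClosed (W' : Set H)) (hWX' : W' ⋖ X) : W' ∈ finCodimClass W₀ :=
  ⟨(mem_Ginf_iff_of_covBy hW' hWX').2 (mem_Ginf_of_covBy hW.1 hWX),
    hW.2.trans ((SameFinCodim.refl X).covBy_down hWX hWX')⟩

/-- `f` maps the star of every member of the `A`-component of `W₀` into a star. -/
def PreservesStars (f : Submodule ℂ H → Submodule ℂ H) (W₀ : Submodule ℂ H) : Prop :=
  ∀ W ∈ finCodimClass W₀, ∃ A, MapsStarTo f W A

lemma MapsStarTo.preservesStars (hA : MapsStarTo f W₀ A) (h : OrthoAdjacencyAut f g)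
    (hW₀ : W₀ ∈ Ginf) : PreservesStars f W₀ := fun W hW => by
  refine hW.2.induction_latticeAdjacent ⊥ (p := fun W => ∃ A, MapsStarTo f W A)
    (fun V hV V' hV' _ _ hVV' ⟨A, hA⟩ => ?_) hW₀ hW.1 (by simp) (by simp) ⟨A, hA⟩
  exact (h.exists_mapsStarTo_or hV').resolve_right fun ⟨B, hB⟩ =>
    hA.not_mapsStarTo_orthogonal h hV hV' hVV' hB

lemma OrthoAdjacencyAut.preservesStars_or (h : OrthoAdjacencyAut f g) (hW₀ : W₀ ∈ Ginf) :
    PreservesStars f W₀ ∨ PreservesStars (fun X => (f X)ᗮ) W₀ :=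
  (h.exists_mapsStarTo_or hW₀).imp (fun ⟨_, hA⟩ => hA.preservesStars h hW₀)
    fun ⟨_, hB⟩ => hB.preservesStars h.orthogonal hW₀

end Stars

section LineImages

variable {f g : Submodule ℂ H → Submodule ℂ H} {W W' W₀ A A' V X : Submodule ℂ H} {c d y z : H}

namespace MapsStarTo

lemma inf_sup_span_singleton_eq (hA : MapsStarTo f W A) (h : OrthoAdjacencyAut f g) (hW : W ∈ Ginf)
    (hWV : W ⋖ V) (hc : c ∈ Vᗮ) (hc₀ : c ≠ 0) :
    OrthoAdjacent (f V) (f (W ⊔ ℂ ∙ c)) ∧ f V ⊓ f (W ⊔ ℂ ∙ c) = A := by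
  have hWc := covBy_sup_span_singleton_of_mem_orthogonal (orthogonal_le hWV.le hc) hc₀
  have hortho := h.orthoAdjacent (mem_Ginf_of_covBy hW hWV) (mem_Ginf_of_covBy hW hWc)
    (.sup_span_singleton hW.1 hWV hc hc₀)
  exact ⟨hortho, hortho.latticeAdjacent.inf_eq (hA.2 V hWV) (hA.2 _ hWc).le⟩

-- With `V = W ⊔ W'`, both sides are the orthogonal complement of `f V` in the common sum of `f V`
-- with `f (W ⊔ ℂ ∙ c)` and with `f (W' ⊔ ℂ ∙ c)`.
lemma inf_orthogonal_eq_of_latticeAdjacent (hA : MapsStarTo f W A) (hA' : MapsStarTo f W' A')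
    (h : OrthoAdjacencyAut f g) (hW : W ∈ Ginf) (hW' : W' ∈ Ginf) (hWW' : LatticeAdjacent W W')
    (hc : c ∈ (W ⊔ W')ᗮ) (hc₀ : c ≠ 0) :
    f (W ⊔ ℂ ∙ c) ⊓ Aᗮ = f (W' ⊔ ℂ ∙ c) ⊓ A'ᗮ := by
  have hcV := notMem_of_mem_orthogonal hc hc₀
  have hVG := hWW'.sup_mem_Ginf hW
  have hWc := covBy_sup_span_singleton_of_mem_orthogonal (orthogonal_le le_sup_left hc) hc₀
  have hWc' := covBy_sup_span_singleton_of_mem_orthogonal (orthogonal_le le_sup_right hc) hc₀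
  have hG := mem_Ginf_of_covBy hW hWc
  have hG' := mem_Ginf_of_covBy hW' hWc'
  have hadj := hWW'.sup_span_singleton hcV
  obtain ⟨hortho, hinf⟩ := hA.inf_sup_span_singleton_eq h hW hWW'.covBy_sup_left hc hc₀
  obtain ⟨hortho', hinf'⟩ := hA'.inf_sup_span_singleton_eq h hW' hWW'.covBy_sup_right hc hc₀
  have hne : A ≠ A' := by
    rintro rfl
    have hWWc' : W ⋖ W' ⊔ ℂ ∙ c := hA.covBy_of_covBy h hW hG' (hA'.2 _ hWc')
    have hVWc' : W ⊔ W' = W' ⊔ ℂ ∙ c := (hWc'.eq_or_eq le_sup_right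
      (sup_le hWWc'.le le_sup_left)).resolve_left hWW'.covBy_sup_right.ne'
    exact hcV (hVWc' ▸ mem_sup_span_singleton_self W' c)
  have hsup := hortho.latticeAdjacent.sup_eq_sup_of_inf_ne_inf hortho'.latticeAdjacent
    (h.latticeAdjacent hG hG' hadj) (by rwa [hinf, hinf'])
  rw [← hinf, ← hinf', hortho.inf_orthogonal_inf_eq (h.mapsTo hVG).1 (h.mapsTo hG).1,
    hortho'.inf_orthogonal_inf_eq (h.mapsTo hVG).1 (h.mapsTo hG').1, hsup]

lemma inf_orthogonal_eq (hA : MapsStarTo f W A) (hA' : MapsStarTo f W' A')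
    (h : OrthoAdjacencyAut f g) (hf : PreservesStars f W) (hW : W ∈ Ginf)
    (hW' : W' ∈ finCodimClass W) (hc : c ∈ Wᗮ) (hc' : c ∈ W'ᗮ) (hc₀ : c ≠ 0) :
    f (W ⊔ ℂ ∙ c) ⊓ Aᗮ = f (W' ⊔ ℂ ∙ c) ⊓ A'ᗮ := by
  suffices SameFinCodim W W' ∧ ∀ A', MapsStarTo f W' A' →
      f (W ⊔ ℂ ∙ c) ⊓ Aᗮ = f (W' ⊔ ℂ ∙ c) ⊓ A'ᗮ from this.2 A' hA'
  refine hW'.2.induction_latticeAdjacent (ℂ ∙ c) (p := fun W' => SameFinCodim W W' ∧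
      ∀ A', MapsStarTo f W' A' → f (W ⊔ ℂ ∙ c) ⊓ Aᗮ = f (W' ⊔ ℂ ∙ c) ⊓ A'ᗮ)
    (fun V hV V' hV' hVc hVc' hadj ⟨hWV, ih⟩ => ?_) hW hW'.1
    (le_orthogonal_span_singleton_iff.2 hc) (le_orthogonal_span_singleton_iff.2 hc')
    ⟨.refl W, fun A' hA' => by rw [hA.unique hA' h hW]⟩
  refine ⟨hWV.trans (.of_covBy hadj.1 hadj.2), fun A' hA' => ?_⟩
  obtain ⟨B, hB⟩ := hf V ⟨hV, hWV⟩
  rw [ih B hB]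
  exact hB.inf_orthogonal_eq_of_latticeAdjacent hA' h hV hV' hadj
    (le_orthogonal_span_singleton_iff.1 (sup_le hVc hVc')) hc₀

lemma inner_eq_zero (hA : MapsStarTo f W A) (h : OrthoAdjacencyAut f g) (hW : W ∈ Ginf)
    (hc : c ∈ Wᗮ) (hd : d ∈ Wᗮ) (hc₀ : c ≠ 0) (hd₀ : d ≠ 0) (hy : y ∈ f (W ⊔ ℂ ∙ c))
    (hz : z ∈ f (W ⊔ ℂ ∙ d) ⊓ Aᗮ) (hcd : inner ℂ c d = 0) : inner ℂ y z = 0 := by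
  have hWc := covBy_sup_span_singleton_of_mem_orthogonal hc hc₀
  have hWd := covBy_sup_span_singleton_of_mem_orthogonal hd hd₀
  have hd' : d ∈ (W ⊔ ℂ ∙ c)ᗮ :=
    inf_orthogonal W (ℂ ∙ c) ▸ ⟨hd, mem_orthogonal_singleton_iff_inner_right.2 hcd⟩
  obtain ⟨hortho, rfl⟩ := hA.inf_sup_span_singleton_eq h hW hWc hd' hd₀
  exact hortho.mem_orthogonal (h.mapsTo (mem_Ginf_of_covBy hW hWc)).1
    (h.mapsTo (mem_Ginf_of_covBy hW hWd)).1 hz.1 hz.2 y hy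

end MapsStarTo

/-- `y` spans the image of the line `ℂ ∙ c` under the map of lines that `f` induces on the
`A`-component of `W₀`: whenever `c ⟂ W` and `f` maps the star of `W` to the star of `A`, the image
is the orthogonal complement of `A` in `f (W ⊔ ℂ ∙ c)`. -/
def IsLineImage (f : Submodule ℂ H → Submodule ℂ H) (W₀ : Submodule ℂ H) (c y : H) : Prop :=
  y ≠ 0 ∧ ∀ W ∈ finCodimClass W₀, ∀ A, c ∈ Wᗮ → MapsStarTo f W A → y ∈ f (W ⊔ ℂ ∙ c) ⊓ Aᗮ

lemma PreservesStars.exists_isLineImage (hf : PreservesStars f W₀) (h : OrthoAdjacencyAut f g)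
    (hW₀ : W₀ ∈ Ginf) (hc₀ : c ≠ 0) : ∃ y, IsLineImage f W₀ c y := by
  obtain ⟨W, hW, hWc⟩ := exists_mem_finCodimClass_le_orthogonal hW₀ (ℂ ∙ c)
  have hc := le_orthogonal_span_singleton_iff.1 hWc
  obtain ⟨A, hA⟩ := hf W hW
  have hcov := hA.2 _ (covBy_sup_span_singleton_of_mem_orthogonal hc hc₀)
  obtain ⟨y, hy, hyA, hy₀⟩ := exists_mem_orthogonal_ne_zero_of_lt hA.1 hcov.lt
  refine ⟨y, hy₀, fun W' hW' A' hc' hA' => ?_⟩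
  rw [← hA.inf_orthogonal_eq hA' h (fun V hV => hf V ⟨hV.1, hW.2.trans hV.2⟩) hW.1
    ⟨hW'.1, hW.2.symm.trans hW'.2⟩ hc hc' hc₀]
  exact ⟨hy, hyA⟩

namespace IsLineImage

lemma map_sup_span_singleton {E : Type*} [NormedAddCommGroup E] [InnerProductSpace ℂ E]
    {f : Submodule ℂ E → Submodule ℂ E} {W₀ W A : Submodule ℂ E} {c y : E}
    (hy : IsLineImage f W₀ c y) (hc₀ : c ≠ 0) (hW : W ∈ finCodimClass W₀) (hc : c ∈ Wᗮ)
    (hA : MapsStarTo f W A) : f (W ⊔ ℂ ∙ c) = A ⊔ ℂ ∙ y :=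
  have hyA := hy.2 W hW A hc hA
  eq_sup_span_singleton_of_covBy (hA.2 _ (covBy_sup_span_singleton_of_mem_orthogonal hc hc₀)) hyA.1
    (notMem_of_mem_orthogonal hyA.2 hy.1)

lemma inner_eq_zero_iff (hy : IsLineImage f W₀ c y) (hz : IsLineImage f W₀ d z)
    (hf : PreservesStars f W₀) (h : OrthoAdjacencyAut f g) (hW₀ : W₀ ∈ Ginf) (hc₀ : c ≠ 0)
    (hd₀ : d ≠ 0) : inner ℂ y z = 0 ↔ inner ℂ c d = 0 := by
  obtain ⟨W, hW, hWcd⟩ := exists_mem_finCodimClass_le_orthogonal hW₀ ((ℂ ∙ c) ⊔ ℂ ∙ d)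
  rw [← inf_orthogonal, le_inf_iff, le_orthogonal_span_singleton_iff,
    le_orthogonal_span_singleton_iff] at hWcd
  obtain ⟨hc, hd⟩ := hWcd
  obtain ⟨A, hA⟩ := hf W hW
  have hyA := hy.2 W hW A hc hA
  have hzA := hz.2 W hW A hd hA
  have hinv {x u : H} (hu : IsLineImage f W₀ x u) (hx₀ : x ≠ 0) (hx : x ∈ Wᗮ) :
      x ∈ g (A ⊔ ℂ ∙ u) := by
    rw [← hu.map_sup_span_singleton hx₀ hW hx hA, h.leftInvOn (mem_Ginf_of_covBy hW.1
      (covBy_sup_span_singleton_of_mem_orthogonal hx hx₀))]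
    exact mem_sup_span_singleton_self W x
  exact ⟨(hA.symm h hW.1).inner_eq_zero h.symm (hA.mem_Ginf h hW.1) hyA.2 hzA.2 hy.1 hz.1
      (hinv hy hc₀ hc) ⟨hinv hz hd₀ hd, hd⟩,
    hA.inner_eq_zero h hW.1 hc hd hc₀ hd₀ hyA.1 hzA⟩

lemma mem_of_mem (hy : IsLineImage f W₀ c y) (hf : PreservesStars f W₀) (hc₀ : c ≠ 0)
    (hW : W ∈ finCodimClass W₀) (hWX : W ⋖ X) (hc : c ∈ X) : y ∈ f X := by
  have hcov : X ⊓ (ℂ ∙ c)ᗮ ⋖ X :=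
    inf_orthogonal_span_singleton_covBy fun hcX => notMem_of_mem_orthogonal hcX hc₀ hc
  have hclosed : IsClosed ((X ⊓ (ℂ ∙ c)ᗮ : Submodule ℂ H) : Set H) :=
    (mem_Ginf_of_covBy hW.1 hWX).1.inter (isClosed_orthogonal _)
  have hc' : c ∈ (X ⊓ (ℂ ∙ c)ᗮ)ᗮ := le_orthogonal_span_singleton_iff.1 inf_le_right
  have hmem := mem_finCodimClass_of_covBy hW hWX hclosed hcov
  obtain ⟨A, hA⟩ := hf _ hmem
  rw [eq_sup_span_singleton_of_covBy hcov hc (notMem_of_mem_orthogonal hc' hc₀)]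
  exact (hy.2 _ hmem A hc' hA).1

lemma mem_orthogonal_of_mem_orthogonal (hy : IsLineImage f W₀ c y) (hf : PreservesStars f W₀)
    (h : OrthoAdjacencyAut f g) (hW₀ : W₀ ∈ Ginf) (hc₀ : c ≠ 0) (hW : W ∈ finCodimClass W₀)
    (hWX : W ⋖ X) (hc : c ∈ Xᗮ) : y ∈ (f X)ᗮ := by
  obtain ⟨A, hA⟩ := hf W hW
  obtain ⟨x, hxX, hxW, hx₀⟩ := exists_mem_orthogonal_ne_zero_of_lt hW.1.1 hWX.lt
  obtain ⟨z, hz⟩ := hf.exists_isLineImage h hW₀ hx₀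
  have hX : X = W ⊔ ℂ ∙ x :=
    eq_sup_span_singleton_of_covBy hWX hxX (notMem_of_mem_orthogonal hxW hx₀)
  rw [hX, hz.map_sup_span_singleton hx₀ hW hxW hA, ← inf_orthogonal]
  exact ⟨(hy.2 W hW A (orthogonal_le hWX.le hc) hA).2, mem_orthogonal_singleton_iff_inner_right.2
    ((hz.inner_eq_zero_iff hy hf h hW₀ hx₀ hc₀).2 (hc x hxX))⟩

end IsLineImage

lemma PreservesStars.exists_smul_eq (hf : PreservesStars f W₀) (h : OrthoAdjacencyAut f g)
    (hW₀ : W₀ ∈ Ginf) (y : H) (hy₀ : y ≠ 0) :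
    ∃ c ≠ 0, ∀ z, IsLineImage f W₀ c z → ∃ t : ℂ, t • z = y := by
  obtain ⟨A₀, hA₀⟩ := hf W₀ ⟨hW₀, .refl W₀⟩
  have hA₀G := hA₀.mem_Ginf h hW₀
  have hg := (hA₀.symm h hW₀).preservesStars h.symm hA₀G
  obtain ⟨A, hA, hAy⟩ := exists_mem_finCodimClass_le_orthogonal hA₀G (ℂ ∙ y)
  have hy := le_orthogonal_span_singleton_iff.1 hAy
  obtain ⟨W, hAW⟩ := hg A hA
  have hWA := hAW.symm h.symm hA.1
  have hWG := hAW.mem_Ginf h.symm hA.1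
  have hW : W ∈ finCodimClass W₀ :=
    ⟨hWG, (hA₀.symm h hW₀).sameFinCodim hAW h.symm hA₀G hA.1 hA.2⟩
  have hAcov := covBy_sup_span_singleton_of_mem_orthogonal hy hy₀
  obtain ⟨c, hcX, hcW, hc₀⟩ := exists_mem_orthogonal_ne_zero_of_lt hWG.1 (hAW.2 _ hAcov).lt
  have hX : g (A ⊔ ℂ ∙ y) = W ⊔ ℂ ∙ c :=
    eq_sup_span_singleton_of_covBy (hAW.2 _ hAcov) hcX (notMem_of_mem_orthogonal hcW hc₀)
  refine ⟨c, hc₀, fun z hz => mem_span_singleton.1 ?_⟩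
  rw [← sup_span_singleton_inf_orthogonal (hz.2 W hW A hcW hWA).2,
    ← hz.map_sup_span_singleton hc₀ hW hcW hWA, ← hX,
    h.rightInvOn (mem_Ginf_of_covBy hA.1 hAcov)]
  exact ⟨mem_sup_span_singleton_self A y, hy⟩

lemma PreservesStars.exists_isOrthoProjective (hf : PreservesStars f W₀)
    (h : OrthoAdjacencyAut f g) (hW₀ : W₀ ∈ Ginf) :
    ∃ φ : H → H, IsOrthoProjective ℂ φ ∧ ∀ W ∈ finCodimClass W₀, ∀ X, W ⋖ X →
      ∀ x, (x ∈ X → φ x ∈ f X) ∧ (x ∈ Xᗮ → φ x ∈ (f X)ᗮ) := by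
  have hex (c : H) : ∃ y, (c = 0 → y = 0) ∧ (c ≠ 0 → IsLineImage f W₀ c y) := by
    obtain rfl | hc₀ := eq_or_ne c 0
    · exact ⟨0, fun _ => rfl, fun hne => (hne rfl).elim⟩
    · obtain ⟨y, hy⟩ := hf.exists_isLineImage h hW₀ hc₀
      exact ⟨y, fun e => (hc₀ e).elim, fun _ => hy⟩
  choose φ hφ₀ hφ using hex
  refine ⟨φ, ⟨fun x y => ?_, fun y => ?_⟩, fun W hW X hWX x => ?_⟩
  · obtain rfl | hx₀ := eq_or_ne x 0
    · simp [hφ₀ 0 rfl]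
    obtain rfl | hy₀ := eq_or_ne y 0
    · simp [hφ₀ 0 rfl]
    exact (hφ x hx₀).inner_eq_zero_iff (hφ y hy₀) hf h hW₀ hx₀ hy₀
  · obtain rfl | hy₀ := eq_or_ne y 0
    · exact ⟨0, 0, zero_smul _ _⟩
    obtain ⟨c, hc₀, hc⟩ := hf.exists_smul_eq h hW₀ y hy₀
    exact ⟨c, hc _ (hφ c hc₀)⟩
  · obtain rfl | hx₀ := eq_or_ne x 0
    · simp [hφ₀ 0 rfl]
    · exact ⟨(hφ x hx₀).mem_of_mem hf hx₀ hW hWX,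
        (hφ x hx₀).mem_orthogonal_of_mem_orthogonal hf h hW₀ hx₀ hW hWX⟩

end LineImages

section MainLemma

lemma eq_map_of_mapsTo_of_mapsTo_orthogonal {𝕜 E F : Type*} [RCLike 𝕜] [NormedAddCommGroup E]
    [InnerProductSpace 𝕜 E] [NormedAddCommGroup F] [InnerProductSpace 𝕜 F] {σ : 𝕜 →+* 𝕜}
    [RingHomSurjective σ] {U : E →ₛₗ[σ] F}
    (hU : Function.Surjective U) {X : Submodule 𝕜 E} [X.HasOrthogonalProjection]
    {K : Submodule 𝕜 F} (hX : ∀ x ∈ X, U x ∈ K) (hX' : ∀ x ∈ Xᗮ, U x ∈ Kᗮ) : K = X.map U := by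
  refine le_antisymm (fun y hy => ?_) (map_le_iff_le_comap.2 hX)
  obtain ⟨x, rfl⟩ := hU y
  obtain ⟨p, hp, q, hq, rfl⟩ := X.exists_add_mem_mem_orthogonal x
  rw [map_add] at hy ⊢
  have hqK : U q ∈ K := (K.add_mem_iff_right (hX p hp)).1 hy
  rw [inner_self_eq_zero.1 (hX' q hq _ hqK), add_zero]
  exact mem_map_of_mem hp

variable {f g : Submodule ℂ H → Submodule ℂ H} {W₀ : Submodule ℂ H}

theorem PreservesStars.exists_eq_map (hf : PreservesStars f W₀) (h : OrthoAdjacencyAut f g)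
    (hW₀ : W₀ ∈ Ginf) :
    (∃ U : H ≃ₗᵢ[ℂ] H, ∀ X, (∃ W ∈ finCodimClass W₀, W ⋖ X) →
      f X = X.map U.toLinearEquiv.toLinearMap) ∨
    ∃ U : H ≃ₗᵢ⋆[ℂ] H, ∀ X, (∃ W ∈ finCodimClass W₀, W ⋖ X) →
      f X = X.map U.toLinearEquiv.toLinearMap := by
  obtain ⟨φ, hφ, hmem⟩ := hf.exists_isOrthoProjective h hW₀
  have heq {σ : ℂ →+* ℂ} [RingHomSurjective σ] {U : H →ₛₗ[σ] H} (hU : Function.Surjective U)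
      (hUφ : ∀ x, U x ∈ ℂ ∙ φ x) (X) : (∃ W ∈ finCodimClass W₀, W ⋖ X) → f X = X.map U := by
    rintro ⟨W, hW, hWX⟩
    have := hasOrthogonalProjection_of_isClosed (mem_Ginf_of_covBy hW.1 hWX).1
    have hspan {x : H} {K : Submodule ℂ H} (hx : φ x ∈ K) : U x ∈ K :=
      (span_singleton_le_iff_mem _ K).2 hx (hUφ x)
    exact eq_map_of_mapsTo_of_mapsTo_orthogonal hU (fun x hx => hspan ((hmem W hW X hWX x).1 hx))
      fun x hx => hspan ((hmem W hW X hWX x).2 hx)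
  have hrank : 3 ≤ Module.rank ℂ H := by
    obtain ⟨y, hy, -⟩ := exists_orthonormal_fin hW₀.2.1 3
    simpa using hy.linearIndependent.cardinal_lift_le_rank
  exact (uhlhorn hφ hrank).imp
    (fun ⟨U, hU⟩ => ⟨U, heq U.surjective hU⟩) fun ⟨U, hU⟩ => ⟨U, heq U.surjective hU⟩

end MainLemma

section AComponents

variable {C : Set (Submodule ℂ H)} {X Y : Submodule ℂ H}

lemma exists_covBy_mem_Ginf (hX : X ∈ Ginf) : ∃ W ∈ Ginf, W ⋖ X := by
  obtain ⟨x, ⟨hx, -⟩, hx₀⟩ := exists_mem_inf_orthogonal_ne_zero hX.2.1 ⊥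
  have hcov : X ⊓ (ℂ ∙ x)ᗮ ⋖ X :=
    inf_orthogonal_span_singleton_covBy fun hx' => notMem_of_mem_orthogonal hx' hx₀ hx
  exact ⟨_, (mem_Ginf_iff_of_covBy (hX.1.inter (isClosed_orthogonal _)) hcov).2 hX, hcov⟩

lemma IsAComponent.exists_mem_finCodimClass_covBy (hC : IsAComponent C) (hC₀ : C.Nonempty) :
    ∃ W₀ ∈ Ginf, ∀ X ∈ C, ∃ W ∈ finCodimClass W₀, W ⋖ X := by
  obtain ⟨X₀, hX₀⟩ := hC₀
  obtain ⟨W₀, hW₀, hcov₀⟩ := exists_covBy_mem_Ginf (hC.1 hX₀)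
  refine ⟨W₀, hW₀, fun X hX => ?_⟩
  obtain ⟨W, hW, hcov⟩ := exists_covBy_mem_Ginf (hC.1 hX)
  exact ⟨W, ⟨hW, (hC.2.1 X₀ hX₀ X hX).covBy_down hcov₀ hcov⟩, hcov⟩

end AComponents

/-- a bijective transformation of `G_∞(H)` preserving ortho-adjacency in both
directions is, on every `A`-component, induced by a unitary or anti-unitary operator, possibly
composed with the orthocomplementary map. -/
theorem stmt0 (hH : ¬FiniteDimensional ℂ H)
    (f : Submodule ℂ H → Submodule ℂ H)
    (hbij : Set.BijOn f (Ginf (H := H)) (Ginf (H := H)))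
    (hf : ∀ X ∈ Ginf (H := H), ∀ Y ∈ Ginf (H := H),
      OrthoAdjacent X Y ↔ OrthoAdjacent (f X) (f Y))
    (C : Set (Submodule ℂ H)) (hC : IsAComponent C) :
    (∃ U : H ≃ₗᵢ[ℂ] H, ∀ X ∈ C, f X = X.map U.toLinearEquiv.toLinearMap) ∨
    (∃ U : H ≃ₗᵢ⋆[ℂ] H, ∀ X ∈ C, f X = X.map U.toLinearEquiv.toLinearMap) ∨
    (∃ U : H ≃ₗᵢ[ℂ] H, ∀ X ∈ C, f X = (X.map U.toLinearEquiv.toLinearMap)ᗮ) ∨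
    (∃ U : H ≃ₗᵢ⋆[ℂ] H, ∀ X ∈ C, f X = (X.map U.toLinearEquiv.toLinearMap)ᗮ) := by
  rcases C.eq_empty_or_nonempty with rfl | hC₀
  · exact .inl ⟨.refl ℂ H, by simp⟩
  obtain ⟨W₀, hW₀, hcov⟩ := hC.exists_mem_finCodimClass_covBy hC₀
  have h := OrthoAdjacencyAut.of_bijOn hbij hf
  rcases h.preservesStars_or hW₀ with hstar | hstar
  · obtain ⟨U, hU⟩ | ⟨U, hU⟩ := hstar.exists_eq_map h hW₀
    · exact .inl ⟨U, fun X hX => hU X (hcov X hX)⟩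
    · exact .inr (.inl ⟨U, fun X hX => hU X (hcov X hX)⟩)
  · have hperp {X : Submodule ℂ H} (hX : X ∈ C) : (f X)ᗮᗮ = f X :=
      orthogonal_orthogonal_of_isClosed (h.mapsTo (hC.1 hX)).1
    obtain ⟨U, hU⟩ | ⟨U, hU⟩ := hstar.exists_eq_map h.orthogonal hW₀
    · refine .inr (.inr (.inl ⟨U, fun X hX => ?_⟩))
      rw [← hU X (hcov X hX), hperp hX]
    · refine .inr (.inr (.inr ⟨U, fun X hX => ?_⟩))
      rw [← hU X (hcov X hX), hperp hX]
end

section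
/- Let X, Y ∈ G_∞(H) be distinct subspaces which are not ortho-adjacent, and suppose there exists Z ∈ G_∞(H) ortho-adjacent to both X and Y. Then either X and Y are adjacent, or X ∩ Y has codimension 2 in both X and Y. -/
open Module Submodule Classical

variable {H : Type*} [NormedAddCommGroup H] [InnerProductSpace ℂ H] [CompleteSpace H]

/-!
Write `[X : W]` for the length of `X / (W ∩ X)`. The chain `K ∩ L ∩ X ⊆ L ∩ X ⊆ X` gives
`[X : K ∩ L] = [L ∩ X : K] + [X : L]`. This yields the triangle inequality
`[Y : X] ≤ [Z : X] + [Y : Z]`. It also shows that if `[Z : X] = [X : Z]` and `[Z : Y] = [Y : Z]`,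
then `[X ∩ Y : Z] + [Y : X]` and `[X ∩ Y : Z] + [X : Y]` both equal `[Z : X ∩ Y]`, so that
`[Y : X] = [X : Y]` once `[X ∩ Y : Z]` is finite. When `Z` is adjacent to `X` and to `Y`, this
common value is at most `2`, and it vanishes only if `X = Y`.
-/

section RelLength

variable {R M : Type*} [Ring R] [AddCommGroup M] [Module R M]

/-- The length of `X ⧸ (W ∩ X)`, the codimension of `W ∩ X` in `X` when `R` is a field. The
arguments are ordered as in `Subgroup.relIndex`, and `W` need not lie in `X`. -/
noncomputable def relLength (W X : Submodule R M) : ℕ∞ :=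
  Module.length R (X ⧸ W.comap X.subtype)

theorem relLength_inf_left (X Y : Submodule R M) : relLength (X ⊓ Y) X = relLength Y X := by
  rw [relLength, relLength, comap_inf, comap_subtype_self, top_inf_eq]

theorem relLength_eq_zero_iff {W X : Submodule R M} : relLength W X = 0 ↔ X ≤ W := by
  rw [relLength, Module.length_eq_zero_iff, Submodule.Quotient.subsingleton_iff,
    comap_subtype_eq_top]

theorem mapQ_injective_of_eq_comap {N : Type*} [AddCommGroup N] [Module R N]
    {p : Submodule R M} {q : Submodule R N} {f : M →ₗ[R] N} (h : p = q.comap f) :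
    Function.Injective (p.mapQ q f h.le) := by
  rw [← LinearMap.ker_eq_bot, ker_mapQ, ← h, mkQ_map_self]

theorem relLength_mono_right (W : Submodule R M) {X X' : Submodule R M} (hX : X ≤ X') :
    relLength W X ≤ relLength W X' :=
  Module.length_le_of_injective _
    (mapQ_injective_of_eq_comap (f := inclusion hX) (q := W.comap X'.subtype) rfl)

theorem relLength_inf (K L X : Submodule R M) :
    relLength (K ⊓ L) X = relLength K (L ⊓ X) + relLength L X := by
  have hK : K.comap (L ⊓ X).subtype =
      ((K ⊓ L).comap X.subtype).comap (inclusion (inf_le_right : L ⊓ X ≤ X)) := by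
    ext x
    simpa using fun _ => x.2.1
  have hL : (K ⊓ L).comap X.subtype ≤ L.comap X.subtype := comap_mono inf_le_right
  have hLX : (L ⊓ X).comap X.subtype = L.comap X.subtype := by
    rw [comap_inf, comap_subtype_self, inf_top_eq]
  refine Module.length_eq_add_of_exact _ (factor hL)
    (mapQ_injective_of_eq_comap hK) (factor_surjective hL) ?_
  rw [LinearMap.exact_iff, factor, ker_mapQ, range_mapQ, range_inclusion, hLX, comap_id]

theorem relLength_le_relLength_inf_left (K L X : Submodule R M) :
    relLength L X ≤ relLength (K ⊓ L) X :=
  relLength_inf K L X ▸ le_add_self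

theorem relLength_triangle (X Y Z : Submodule R M) :
    relLength X Z ≤ relLength X Y + relLength Y Z :=
  calc relLength X Z ≤ relLength (Y ⊓ X) Z := relLength_le_relLength_inf_left Y X Z
    _ = relLength X (Y ⊓ Z) + relLength Y Z := by rw [inf_comm, relLength_inf]
    _ ≤ relLength X Y + relLength Y Z := by gcongr; exact relLength_mono_right X inf_le_left

theorem relLength_inf_add_of_comm (X : Submodule R M) {Y Z : Submodule R M}
    (hYZ : relLength Y Z = relLength Z Y) :
    relLength Z (X ⊓ Y) + relLength X Y = relLength (X ⊓ Y) Z := by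
  rw [← relLength_inf, inf_comm, relLength_inf, ← hYZ, inf_comm, ← relLength_inf]

theorem relLength_comm_of_comm {X Y Z : Submodule R M} (hXZ : relLength X Z = relLength Z X)
    (hYZ : relLength Y Z = relLength Z Y) (hfin : relLength Z (X ⊓ Y) ≠ ⊤) :
    relLength X Y = relLength Y X := by
  refine ENat.add_right_injective_of_ne_top hfin ?_
  calc relLength Z (X ⊓ Y) + relLength X Y = relLength (X ⊓ Y) Z := relLength_inf_add_of_comm X hYZ
    _ = relLength (Y ⊓ X) Z := by rw [inf_comm]
    _ = relLength Z (Y ⊓ X) + relLength Y X := (relLength_inf_add_of_comm Y hXZ).symm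
    _ = relLength Z (X ⊓ Y) + relLength Y X := by rw [inf_comm]

theorem stmt1_general {X Y Z : Submodule R M} (hne : X ≠ Y)
    (hZX : relLength X Z = 1 ∧ relLength Z X = 1) (hZY : relLength Y Z = 1 ∧ relLength Z Y = 1) :
    (relLength Y X = 1 ∧ relLength X Y = 1) ∨ (relLength Y X = 2 ∧ relLength X Y = 2) := by
  have hfin : relLength Z (X ⊓ Y) ≠ ⊤ :=
    ne_top_of_le_ne_top (by simp [hZX.2]) (relLength_mono_right Z inf_le_left)
  have hcomm : relLength X Y = relLength Y X :=
    relLength_comm_of_comm (hZX.1.trans hZX.2.symm) (hZY.1.trans hZY.2.symm) hfin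
  have hle : relLength X Y ≤ 2 := by
    simpa [hZX.1, hZY.2, one_add_one_eq_two] using relLength_triangle X Z Y
  have hpos : relLength X Y ≠ 0 := fun h =>
    hne (le_antisymm (relLength_eq_zero_iff.mp (hcomm ▸ h)) (relLength_eq_zero_iff.mp h))
  rw [← hcomm, and_self, and_self]
  lift relLength X Y to ℕ using ne_top_of_le_ne_top (by simp) hle with n
  norm_cast at hle hpos ⊢
  omega

end RelLength

theorem length_eq_natCast_iff {K V : Type*} [DivisionRing K] [AddCommGroup V] [Module K V]
    {n : ℕ} : Module.length K V = n ↔ FiniteDimensional K V ∧ finrank K V = n := by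
  refine ⟨fun h => ?_, fun ⟨_, h⟩ => by rw [Module.length_eq_finrank, h]⟩
  have hV : FiniteDimensional K V := by
    rw [Module.length_eq_rank, Cardinal.toENat_eq_natCast] at h
    exact Module.rank_lt_aleph0_iff.mp (h ▸ Cardinal.natCast_lt_aleph0)
  exact ⟨hV, by exact_mod_cast (Module.length_eq_finrank K V).symm.trans h⟩

section CodimIn

variable {E : Type*} [NormedAddCommGroup E] [InnerProductSpace ℂ E]

theorem codimIn_iff_relLength {W X : Submodule ℂ E} {n : ℕ} :
    CodimIn W X n ↔ W ≤ X ∧ relLength W X = n := by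
  rw [CodimIn, relLength, length_eq_natCast_iff]

theorem codimIn_inf_left_iff {X Y : Submodule ℂ E} {n : ℕ} :
    CodimIn (X ⊓ Y) X n ↔ relLength Y X = n := by
  rw [codimIn_iff_relLength, relLength_inf_left, and_iff_right inf_le_left]

theorem codimIn_inf_right_iff {X Y : Submodule ℂ E} {n : ℕ} :
    CodimIn (X ⊓ Y) Y n ↔ relLength X Y = n := by
  rw [inf_comm, codimIn_inf_left_iff]

theorem adjacent_iff_relLength {X Y : Submodule ℂ E} :
    Adjacent X Y ↔ relLength Y X = 1 ∧ relLength X Y = 1 := by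
  rw [Adjacent, codimIn_inf_left_iff, codimIn_inf_right_iff, Nat.cast_one]

end CodimIn

/-- if distinct `X, Y ∈ G_∞(H)` are not ortho-adjacent but some `Z ∈ G_∞(H)` is
ortho-adjacent to both, then either `X, Y` are adjacent or `X ∩ Y` has codimension 2 in both. -/
theorem stmt1 (hH : ¬FiniteDimensional ℂ H) (X Y : Submodule ℂ H)
    (hX : X ∈ Ginf (H := H)) (hY : Y ∈ Ginf (H := H)) (hne : X ≠ Y)
    (hnoa : ¬OrthoAdjacent X Y)
    (hZ : ∃ Z ∈ Ginf (H := H), OrthoAdjacent Z X ∧ OrthoAdjacent Z Y) :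
    Adjacent X Y ∨ (CodimIn (X ⊓ Y) X 2 ∧ CodimIn (X ⊓ Y) Y 2) := by
  obtain ⟨Z, -, ⟨hZX, -⟩, ⟨hZY, -⟩⟩ := hZ
  rw [adjacent_iff_relLength, codimIn_inf_left_iff, codimIn_inf_right_iff]
  exact stmt1_general hne (adjacent_iff_relLength.mp hZX) (adjacent_iff_relLength.mp hZY)
end

section
/- Let X, Y ∈ G_∞(H) be compatible subspaces such that X ∩ Y has codimension 2 in both X and Y, and let Z ∈ G_∞(H) be ortho-adjacent to both X and Y. Then there are precisely two elements of G_∞(H) which are ortho-adjacent to each of X, Y and Z. -/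
open Module Submodule Classical

variable {H : Type*} [NormedAddCommGroup H] [InnerProductSpace ℂ H] [CompleteSpace H]

/-!
For closed subspaces, compatibility of `K` with `L` means that `K` is invariant under the
projection onto `L`, so `K` is the orthogonal sum of `K ⊓ L` and `K ⊓ Lᗮ`; a line compatible with
`L` is therefore contained in `L` or orthogonal to it. Hence `K` and `L` are ortho-adjacent exactly
when they are compatible and `K ⊓ Lᗮ`, `L ⊓ Kᗮ` are lines.

A subspace `Z` ortho-adjacent to `X` and `Y` meets each of the planes `X ⊓ Yᗮ`, `Y ⊓ Xᗮ` in a line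
and is spanned by `X ⊓ Y` and these two lines `P`, `Q`. If `W` is ortho-adjacent
to `X`, `Y` and `Z`, then `P` and `Q` are each contained in `W` or orthogonal to it, and since
`Z ⊓ Wᗮ` is a line, exactly one of them is contained in `W`. So `W` arises from `Z` by replacing
either `P` or `Q` by its orthogonal complement in the corresponding plane.
-/

section CompatibleLattice

variable {𝕜 E : Type*} [RCLike 𝕜] [NormedAddCommGroup E] [InnerProductSpace 𝕜 E]

/-- The lattice of subspaces invariant under the orthogonal projection onto `L`. For subspaces
that are themselves closed this is compatibility with `L`; invariance makes sense for arbitrary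
subspaces and is visibly stable under `⊓` and `⊔`. -/
noncomputable abbrev compatibleLattice (L : Submodule 𝕜 E) [L.HasOrthogonalProjection] :
    Sublattice (Submodule 𝕜 E) :=
  End.invtSubmodule (L.starProjection : E →ₗ[𝕜] E)

variable {K L : Submodule 𝕜 E} [L.HasOrthogonalProjection]

lemma mem_compatibleLattice_of_le (h : K ≤ L) : K ∈ compatibleLattice L := fun x hx => by
  simpa [starProjection_eq_self_iff.2 (h hx)] using hx

lemma mem_compatibleLattice_of_isOrtho (h : K ⟂ L) : K ∈ compatibleLattice L := fun x hx => by
  simp [(starProjection_apply_eq_zero_iff L).2 (h.le hx)]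

lemma orthogonal_mem_compatibleLattice (h : K ∈ compatibleLattice L) :
    Kᗮ ∈ compatibleLattice L :=
  L.starProjection_isSymmetric.orthogonalComplement_mem_invtSubmodule h

lemma commute_starProjection_iff_mem_compatibleLattice [K.HasOrthogonalProjection] :
    Commute K.starProjection L.starProjection ↔ K ∈ compatibleLattice L := by
  rw [ContinuousLinearMap.IsIdempotentElem.commute_iff K.isIdempotentElem_starProjection,
    range_starProjection, ker_starProjection]
  exact and_iff_left_of_imp orthogonal_mem_compatibleLattice

lemma mem_compatibleLattice_comm [K.HasOrthogonalProjection] :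
    K ∈ compatibleLattice L ↔ L ∈ compatibleLattice K := by
  simp only [← commute_starProjection_iff_mem_compatibleLattice, commute_iff_eq, eq_comm]

lemma inf_sup_inf_orthogonal_eq (h : K ∈ compatibleLattice L) : K ⊓ L ⊔ K ⊓ Lᗮ = K := by
  refine le_antisymm (sup_le inf_le_left inf_le_left) fun x hx => ?_
  have hproj : L.starProjection x ∈ K := h hx
  rw [← add_sub_cancel (L.starProjection x) x]
  exact add_mem_sup ⟨hproj, starProjection_apply_mem L x⟩
    ⟨K.sub_mem hx hproj, sub_starProjection_mem_orthogonal x⟩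

lemma le_or_isOrtho_of_isAtom (hK : IsAtom K) (h : K ∈ compatibleLattice L) :
    K ≤ L ∨ K ⟂ L := by
  refine (hK.le_iff.1 (inf_le_left : K ⊓ L ≤ K)).symm.imp inf_eq_left.1 fun hbot => ?_
  rw [isOrtho_iff_le, ← inf_eq_left]
  simpa only [hbot, bot_sup_eq] using inf_sup_inf_orthogonal_eq h

lemma inf_covBy_left_iff_isAtom (h : K ∈ compatibleLattice L) :
    K ⊓ L ⋖ K ↔ IsAtom (K ⊓ Lᗮ) := by
  have hdisj : K ⊓ L ⊓ (K ⊓ Lᗮ) = ⊥ :=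
    (L.orthogonal_disjoint.mono inf_le_right inf_le_right).eq_bot
  rw [← bot_covBy_iff, ← hdisj]
  refine ⟨fun hcov => CovBy.inf_of_sup_left ?_, fun hcov => ?_⟩
  · rwa [inf_sup_inf_orthogonal_eq h]
  · simpa only [inf_sup_inf_orthogonal_eq h] using covBy_sup_of_inf_covBy_right hcov

lemma inf_wcovBy_left_of_inf_orthogonal_le (h : K ∈ compatibleLattice L) {P : Submodule 𝕜 E}
    (hP : IsAtom P) (hle : K ⊓ Lᗮ ≤ P) : K ⊓ L ⩿ K := by
  rcases hP.le_iff.1 hle with hbot | rfl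
  · have hK : K ⊓ L = K := by simpa only [hbot, sup_bot_eq] using inf_sup_inf_orthogonal_eq h
    exact hK.wcovBy
  · exact ((inf_covBy_left_iff_isAtom h).2 hP).wcovBy

lemma finiteDimensional_of_mem_compatibleLattice (h : K ∈ compatibleLattice L)
    [FiniteDimensional 𝕜 ↥(K ⊓ L)] [FiniteDimensional 𝕜 ↥(K ⊓ Lᗮ)] : FiniteDimensional 𝕜 K := by
  rw [← inf_sup_inf_orthogonal_eq h]
  infer_instance

end CompatibleLattice

section Orthogonal

variable {𝕜 E : Type*} [RCLike 𝕜] [NormedAddCommGroup E] [InnerProductSpace 𝕜 E]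

lemma isOrtho_of_le_of_le_orthogonal {K P Q : Submodule 𝕜 E} (hP : P ≤ K) (hQ : Q ≤ Kᗮ) :
    P ⟂ Q :=
  (isOrtho_orthogonal_right K).mono hP hQ

lemma sup_inf_sup_eq_left_of_isOrtho {N P Q : Submodule 𝕜 E} (hNP : N ⟂ P) (hPQ : P ⟂ Q) :
    (N ⊔ P) ⊓ (N ⊔ Q) = N := by
  have hdisj : Disjoint P (N ⊔ Q) := (isOrtho_sup_right.2 ⟨hNP.symm, hPQ⟩).disjoint
  rw [sup_inf_assoc_of_le P le_sup_left, hdisj.eq_bot, sup_bot_eq]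

end Orthogonal

lemma covBy_sup_of_isAtom {α : Type*} [Lattice α] [OrderBot α] [IsUpperModularLattice α] {a b : α}
    (hb : IsAtom b) (hab : Disjoint a b) : a ⋖ a ⊔ b := by
  apply covBy_sup_of_inf_covBy_right
  rw [hab.eq_bot]
  exact hb.bot_covBy

lemma finiteDimensional_of_isAtom {k V : Type*} [DivisionRing k] [AddCommGroup V] [Module k V]
    {P : Submodule k V} (hP : IsAtom P) : FiniteDimensional k P :=
  have := isSimpleModule_iff_isAtom.2 hP
  inferInstance

/-- The position of `Z` relative to `X` and `Y` when it is ortho-adjacent to both: the planes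
`X ⊓ Yᗮ` and `Y ⊓ Xᗮ` are each cut by `Z` into two orthogonal lines, one inside `Z` and one
orthogonal to it, and `Z` is spanned by `X ⊓ Y` and the two lines it contains. -/
structure IsOrthoCorner {𝕜 E : Type*} [RCLike 𝕜] [NormedAddCommGroup E] [InnerProductSpace 𝕜 E]
    (X Y Z : Submodule 𝕜 E) : Prop where
  isAtom_inf_orthogonal_left : IsAtom (Z ⊓ Xᗮ)
  isAtom_inf_orthogonal_right : IsAtom (Z ⊓ Yᗮ)
  isAtom_left_inf_orthogonal : IsAtom (X ⊓ Zᗮ)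
  isAtom_right_inf_orthogonal : IsAtom (Y ⊓ Zᗮ)
  left_inf_orthogonal_right_eq : X ⊓ Yᗮ = Z ⊓ Yᗮ ⊔ X ⊓ Zᗮ
  right_inf_orthogonal_left_eq : Y ⊓ Xᗮ = Z ⊓ Xᗮ ⊔ Y ⊓ Zᗮ
  eq_sup : Z = X ⊓ Y ⊔ Z ⊓ Yᗮ ⊔ Z ⊓ Xᗮ

/-- The subspace obtained from a corner `Z` of `X` and `Y` by keeping its line in `X ⊓ Yᗮ` and
replacing its line in `Y ⊓ Xᗮ` by the orthogonal one. -/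
def flipCorner {𝕜 E : Type*} [RCLike 𝕜] [NormedAddCommGroup E] [InnerProductSpace 𝕜 E]
    (X Y Z : Submodule 𝕜 E) : Submodule 𝕜 E :=
  X ⊓ Y ⊔ Z ⊓ Yᗮ ⊔ Y ⊓ Zᗮ

section Corner

variable {𝕜 E : Type*} [RCLike 𝕜] [NormedAddCommGroup E] [InnerProductSpace 𝕜 E]
  {X Y Z W : Submodule 𝕜 E}

lemma inf_orthogonal_eq_sup_of_isAtom [Y.HasOrthogonalProjection] [Z.HasOrthogonalProjection]
    (hXY : X ∈ compatibleLattice Y) (hXYZ : X ⊓ Yᗮ ∈ compatibleLattice Z)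
    (hnot : ¬X ⊓ Y ⩿ X) (hZY : IsAtom (Z ⊓ Yᗮ)) (hXZ : IsAtom (X ⊓ Zᗮ)) :
    X ⊓ Yᗮ = Z ⊓ Yᗮ ⊔ X ⊓ Zᗮ := by
  have hsplit := inf_sup_inf_orthogonal_eq hXYZ
  have hle_inside : X ⊓ Yᗮ ⊓ Z ≤ Z ⊓ Yᗮ := le_inf inf_le_right (inf_le_left.trans inf_le_right)
  have hle_outside : X ⊓ Yᗮ ⊓ Zᗮ ≤ X ⊓ Zᗮ := inf_le_inf_right _ inf_le_left
  rcases hZY.le_iff.1 hle_inside with hbot | hinside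
  · rw [hbot, bot_sup_eq] at hsplit
    exact (hnot (inf_wcovBy_left_of_inf_orthogonal_le hXY hXZ (hsplit ▸ hle_outside))).elim
  rcases hXZ.le_iff.1 hle_outside with hbot | houtside
  · rw [hbot, sup_bot_eq] at hsplit
    exact (hnot (inf_wcovBy_left_of_inf_orthogonal_le hXY hZY (hsplit ▸ hle_inside))).elim
  rw [← hinside, ← houtside, hsplit]

lemma inf_le_of_inf_orthogonal_le_orthogonal [Z.HasOrthogonalProjection]
    (hXZ : X ∈ compatibleLattice Z) (hYZ : Y ∈ compatibleLattice Z) (hle : X ⊓ Zᗮ ≤ Yᗮ) :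
    X ⊓ Y ≤ Z := by
  have houtside : X ⊓ Y ⊓ Zᗮ = ⊥ :=
    eq_bot_iff.2 (Y.orthogonal_disjoint (inf_le_left.trans inf_le_right)
      ((inf_le_inf_right _ inf_le_left).trans hle))
  have hsplit := inf_sup_inf_orthogonal_eq (Sublattice.inf_mem hXZ hYZ)
  rwa [houtside, sup_bot_eq, inf_eq_left] at hsplit

lemma isOrthoCorner_of_isAtom [X.HasOrthogonalProjection] [Y.HasOrthogonalProjection]
    [Z.HasOrthogonalProjection] (hXY : X ∈ compatibleLattice Y) (hZX : Z ∈ compatibleLattice X)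
    (hZY : Z ∈ compatibleLattice Y) (hnotX : ¬X ⊓ Y ⩿ X) (hnotY : ¬X ⊓ Y ⩿ Y)
    (hatom_ZX : IsAtom (Z ⊓ Xᗮ)) (hatom_ZY : IsAtom (Z ⊓ Yᗮ))
    (hatom_XZ : IsAtom (X ⊓ Zᗮ)) (hatom_YZ : IsAtom (Y ⊓ Zᗮ)) : IsOrthoCorner X Y Z := by
  have hYX := mem_compatibleLattice_comm.1 hXY
  have hXZ := mem_compatibleLattice_comm.1 hZX
  have hYZ := mem_compatibleLattice_comm.1 hZY
  have hplane_X : X ⊓ Yᗮ = Z ⊓ Yᗮ ⊔ X ⊓ Zᗮ :=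
    inf_orthogonal_eq_sup_of_isAtom hXY
      (Sublattice.inf_mem hXZ (orthogonal_mem_compatibleLattice hYZ)) hnotX hatom_ZY hatom_XZ
  have hplane_Y : Y ⊓ Xᗮ = Z ⊓ Xᗮ ⊔ Y ⊓ Zᗮ :=
    inf_orthogonal_eq_sup_of_isAtom hYX
      (Sublattice.inf_mem hYZ (orthogonal_mem_compatibleLattice hXZ)) (inf_comm X Y ▸ hnotY)
      hatom_ZX hatom_YZ
  have hinf : X ⊓ Y ≤ Z :=
    inf_le_of_inf_orthogonal_le_orthogonal hXZ hYZ
      ((le_sup_right.trans hplane_X.ge).trans inf_le_right)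
  have hline : Z ⊓ Xᗮ ≤ Y := (le_sup_left.trans hplane_Y.ge).trans inf_le_left
  refine ⟨hatom_ZX, hatom_ZY, hatom_XZ, hatom_YZ, hplane_X, hplane_Y, ?_⟩
  calc Z = Z ⊓ Y ⊔ Z ⊓ Yᗮ := (inf_sup_inf_orthogonal_eq hZY).symm
    _ = Z ⊓ Y ⊓ X ⊔ Z ⊓ Y ⊓ Xᗮ ⊔ Z ⊓ Yᗮ := by
      rw [inf_sup_inf_orthogonal_eq (Sublattice.inf_mem hZX hYX)]
    _ = X ⊓ Y ⊔ Z ⊓ Xᗮ ⊔ Z ⊓ Yᗮ := by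
      rw [inf_assoc, inf_comm Y X, inf_eq_right.2 hinf, inf_right_comm, inf_eq_left.2 hline]
    _ = X ⊓ Y ⊔ Z ⊓ Yᗮ ⊔ Z ⊓ Xᗮ := sup_right_comm _ _ _

namespace IsOrthoCorner

lemma symm (h : IsOrthoCorner X Y Z) : IsOrthoCorner Y X Z where
  isAtom_inf_orthogonal_left := h.isAtom_inf_orthogonal_right
  isAtom_inf_orthogonal_right := h.isAtom_inf_orthogonal_left
  isAtom_left_inf_orthogonal := h.isAtom_right_inf_orthogonal
  isAtom_right_inf_orthogonal := h.isAtom_left_inf_orthogonal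
  left_inf_orthogonal_right_eq := h.right_inf_orthogonal_left_eq
  right_inf_orthogonal_left_eq := h.left_inf_orthogonal_right_eq
  eq_sup := by rw [inf_comm Y X, sup_right_comm]; exact h.eq_sup

lemma inf_orthogonal_right_le_left (h : IsOrthoCorner X Y Z) : Z ⊓ Yᗮ ≤ X :=
  (le_sup_left.trans h.left_inf_orthogonal_right_eq.ge).trans inf_le_left

lemma left_inf_orthogonal_le_orthogonal (h : IsOrthoCorner X Y Z) : X ⊓ Zᗮ ≤ Yᗮ :=
  (le_sup_right.trans h.left_inf_orthogonal_right_eq.ge).trans inf_le_right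

lemma eq_sup_sup_left [Y.HasOrthogonalProjection] (h : IsOrthoCorner X Y Z)
    (hXY : X ∈ compatibleLattice Y) : X = X ⊓ Y ⊔ Z ⊓ Yᗮ ⊔ X ⊓ Zᗮ := by
  rw [sup_assoc, ← h.left_inf_orthogonal_right_eq, inf_sup_inf_orthogonal_eq hXY]

lemma inf_le (h : IsOrthoCorner X Y Z) : X ⊓ Y ≤ Z :=
  (le_sup_left.trans le_sup_left).trans h.eq_sup.ge

lemma isOrtho_inf_orthogonal (h : IsOrthoCorner X Y Z) : Z ⊓ Yᗮ ⟂ Z ⊓ Xᗮ :=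
  isOrtho_of_le_of_le_orthogonal h.inf_orthogonal_right_le_left inf_le_right

lemma isClosed_flipCorner (h : IsOrthoCorner X Y Z) (hX : IsClosed (X : Set E))
    (hY : IsClosed (Y : Set E)) : IsClosed (flipCorner X Y Z : Set E) := by
  have := finiteDimensional_of_isAtom h.isAtom_inf_orthogonal_right
  have := finiteDimensional_of_isAtom h.isAtom_right_inf_orthogonal
  exact isClosed_sup_finiteDimensional _ _ (isClosed_sup_finiteDimensional _ _ (hX.inter hY))

lemma flipCorner_ne_flipCorner (h : IsOrthoCorner X Y Z) : flipCorner X Y Z ≠ flipCorner Y X Z := by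
  intro heq
  have hle : X ⊓ Zᗮ ≤ flipCorner X Y Z := le_sup_right.trans heq.ge
  have hortho : X ⊓ Zᗮ ⟂ flipCorner X Y Z := by
    refine isOrtho_sup_right.2 ⟨isOrtho_sup_right.2 ⟨?_, ?_⟩, ?_⟩
    · exact (isOrtho_of_le_of_le_orthogonal h.inf_le inf_le_right).symm
    · exact (isOrtho_of_le_of_le_orthogonal inf_le_left inf_le_right).symm
    · exact isOrtho_of_le_of_le_orthogonal inf_le_left h.symm.left_inf_orthogonal_le_orthogonal
  exact h.isAtom_left_inf_orthogonal.1 (isOrtho_self.1 (hortho.mono_right hle))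

lemma eq_flipCorner_of_le [Z.HasOrthogonalProjection] (hZ : IsOrthoCorner X Y Z)
    (hW : IsOrthoCorner X Y W) (hWX : W ⊓ Xᗮ ∈ compatibleLattice Z) (hle : Z ⊓ Yᗮ ≤ W)
    (hortho : Z ⊓ Xᗮ ⟂ W) : W = flipCorner X Y Z := by
  have hline_left : Z ⊓ Yᗮ = W ⊓ Yᗮ :=
    (hW.isAtom_inf_orthogonal_right.le_iff_eq hZ.isAtom_inf_orthogonal_right.1).1
      (le_inf hle inf_le_right)
  have hline_right : W ⊓ Xᗮ = Y ⊓ Zᗮ := by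
    refine (hZ.isAtom_right_inf_orthogonal.le_iff_eq hW.isAtom_inf_orthogonal_left.1).1
      (le_inf hW.symm.inf_orthogonal_right_le_left ?_)
    refine ((le_or_isOrtho_of_isAtom hW.isAtom_inf_orthogonal_left hWX).resolve_left ?_).le
    intro hWXZ
    exact hW.isAtom_inf_orthogonal_left.1
      (isOrtho_self.1 (hortho.mono (le_inf hWXZ inf_le_right) inf_le_left))
  rw [flipCorner, hline_left, ← hline_right]
  exact hW.eq_sup

lemma eq_flipCorner_or_eq_flipCorner [Z.HasOrthogonalProjection] [W.HasOrthogonalProjection]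
    (hZ : IsOrthoCorner X Y Z) (hW : IsOrthoCorner X Y W)
    (hXZ : X ∈ compatibleLattice Z) (hYZ : Y ∈ compatibleLattice Z) (hWZ : W ∈ compatibleLattice Z)
    (hXW : X ∈ compatibleLattice W) (hYW : Y ∈ compatibleLattice W) (hZW : Z ∈ compatibleLattice W)
    (hatom : IsAtom (Z ⊓ Wᗮ)) : W = flipCorner X Y Z ∨ W = flipCorner Y X Z := by
  have hWXZ := Sublattice.inf_mem hWZ (orthogonal_mem_compatibleLattice hXZ)
  have hWYZ := Sublattice.inf_mem hWZ (orthogonal_mem_compatibleLattice hYZ)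
  have hZXW := Sublattice.inf_mem hZW (orthogonal_mem_compatibleLattice hXW)
  have hZYW := Sublattice.inf_mem hZW (orthogonal_mem_compatibleLattice hYW)
  rcases le_or_isOrtho_of_isAtom hZ.isAtom_inf_orthogonal_right hZYW with hYle | hYortho <;>
    rcases le_or_isOrtho_of_isAtom hZ.isAtom_inf_orthogonal_left hZXW with hXle | hXortho
  · have hle : Z ≤ W := hZ.eq_sup.le.trans (sup_le (sup_le hW.inf_le hYle) hXle)
    exact (hatom.1 (W.orthogonal_disjoint.mono_left hle).eq_bot).elim
  · exact .inl (hZ.eq_flipCorner_of_le hW hWXZ hYle hXortho)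
  · exact .inr (hZ.symm.eq_flipCorner_of_le hW.symm hWYZ hXle hYortho)
  · have hX := (hatom.le_iff_eq hZ.isAtom_inf_orthogonal_left.1).1 (le_inf inf_le_left hXortho.le)
    have hY := (hatom.le_iff_eq hZ.isAtom_inf_orthogonal_right.1).1 (le_inf inf_le_left hYortho.le)
    have hself := hZ.isOrtho_inf_orthogonal
    rw [hX, hY, isOrtho_self] at hself
    exact (hatom.1 hself).elim

end IsOrthoCorner

end Corner

section Codim

variable {V : Type*} [NormedAddCommGroup V] [InnerProductSpace ℂ V] {K L : Submodule ℂ V}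

lemma codimIn_one_iff_covBy_s3 : CodimIn K L 1 ↔ K ⋖ L := by
  have hiff : K ≤ L → (K ⋖ L ↔ finrank ℂ (L ⧸ K.comap L.subtype) = 1) := fun hle =>
    (covBy_iff_quot_is_simple hle).trans isSimpleModule_iff_finrank_eq_one
  refine ⟨fun h => (hiff h.1).2 h.2.2, fun h => ?_⟩
  have hone := (hiff h.le).1 h
  exact ⟨h.le, FiniteDimensional.of_finrank_eq_succ hone, hone⟩

lemma CodimIn.not_wcovBy {n : ℕ} (h : CodimIn K L n) (hn : 1 < n) : ¬K ⩿ L := by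
  rw [wcovBy_iff_covBy_or_eq, ← codimIn_one_iff_covBy_s3]
  rintro (hone | rfl)
  · exact hn.ne (hone.2.2.symm.trans h.2.2)
  · have hzero := h.2.2
    rw [comap_subtype_self, finrank_zero_of_subsingleton] at hzero
    omega

lemma adjacent_iff_covBy : Adjacent K L ↔ K ⊓ L ⋖ K ∧ K ⊓ L ⋖ L :=
  and_congr codimIn_one_iff_covBy_s3 codimIn_one_iff_covBy_s3

end Codim

section OrthoAdjacent

lemma projCLM_eq_starProjection_s3 (K : Submodule ℂ H) [K.HasOrthogonalProjection] :
    projCLM K = K.starProjection := by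
  have hclosed : IsClosed (K : Set H) := K.orthogonal_orthogonal ▸ Kᗮ.isClosed_orthogonal
  rw [projCLM, dif_pos hclosed]
  rfl

variable {K L X Y Z : Submodule ℂ H} [K.HasOrthogonalProjection] [L.HasOrthogonalProjection]

lemma compatible_iff_mem_compatibleLattice : Compatible K L ↔ K ∈ compatibleLattice L := by
  rw [Compatible, projCLM_eq_starProjection_s3, projCLM_eq_starProjection_s3,
    commute_starProjection_iff_mem_compatibleLattice]

lemma orthoAdjacent_iff :
    OrthoAdjacent K L ↔ K ∈ compatibleLattice L ∧ IsAtom (K ⊓ Lᗮ) ∧ IsAtom (L ⊓ Kᗮ) := by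
  rw [OrthoAdjacent, compatible_iff_mem_compatibleLattice, and_comm, adjacent_iff_covBy]
  refine and_congr_right fun h => and_congr (inf_covBy_left_iff_isAtom h) ?_
  rw [inf_comm, inf_covBy_left_iff_isAtom (mem_compatibleLattice_comm.1 h)]

lemma orthoAdjacent_of_eq_sup {N P Q : Submodule ℂ H} (hK : K = N ⊔ P) (hL : L = N ⊔ Q)
    (hP : IsAtom P) (hQ : IsAtom Q) (hNP : N ⟂ P) (hNQ : N ⟂ Q) (hPQ : P ⟂ Q) :
    OrthoAdjacent K L := by
  have hinf : K ⊓ L = N := by rw [hK, hL, sup_inf_sup_eq_left_of_isOrtho hNP hPQ]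
  have hNL : N ≤ L := hL ▸ le_sup_left
  have hPL : P ⟂ L := hL ▸ isOrtho_sup_right.2 ⟨hNP.symm, hPQ⟩
  refine ⟨adjacent_iff_covBy.2 ?_, compatible_iff_mem_compatibleLattice.2 ?_⟩
  · rw [hinf, hK, hL]
    exact ⟨covBy_sup_of_isAtom hP hNP.disjoint, covBy_sup_of_isAtom hQ hNQ.disjoint⟩
  · rw [hK]
    exact Sublattice.sup_mem (mem_compatibleLattice_of_le hNL)
      (mem_compatibleLattice_of_isOrtho hPL)

lemma finiteDimensional_of_orthoAdjacent (h : OrthoAdjacent K L) [FiniteDimensional ℂ K] :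
    FiniteDimensional ℂ L := by
  obtain ⟨hKL, -, hatom⟩ := orthoAdjacent_iff.1 h
  have := finiteDimensional_of_isAtom hatom
  have := finiteDimensional_of_le (inf_le_right : L ⊓ K ≤ K)
  exact finiteDimensional_of_mem_compatibleLattice (mem_compatibleLattice_comm.1 hKL)

lemma orthoAdjacent_orthogonal (h : OrthoAdjacent K L) : OrthoAdjacent Kᗮ Lᗮ := by
  obtain ⟨hKL, hatom_KL, hatom_LK⟩ := orthoAdjacent_iff.1 h
  refine orthoAdjacent_iff.2 ⟨?_, ?_, ?_⟩
  · exact mem_compatibleLattice_comm.1 (orthogonal_mem_compatibleLattice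
      (mem_compatibleLattice_comm.1 (orthogonal_mem_compatibleLattice hKL)))
  · rwa [L.orthogonal_orthogonal, inf_comm]
  · rwa [K.orthogonal_orthogonal, inf_comm]

variable [X.HasOrthogonalProjection] [Y.HasOrthogonalProjection] [Z.HasOrthogonalProjection]

lemma isOrthoCorner_of_orthoAdjacent (hXY : Compatible X Y) (hnotX : ¬X ⊓ Y ⩿ X)
    (hnotY : ¬X ⊓ Y ⩿ Y) (hZX : OrthoAdjacent Z X) (hZY : OrthoAdjacent Z Y) :
    IsOrthoCorner X Y Z := by
  obtain ⟨hcompX, hatom_ZX, hatom_XZ⟩ := orthoAdjacent_iff.1 hZX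
  obtain ⟨hcompY, hatom_ZY, hatom_YZ⟩ := orthoAdjacent_iff.1 hZY
  exact isOrthoCorner_of_isAtom (compatible_iff_mem_compatibleLattice.1 hXY) hcompX hcompY
    hnotX hnotY hatom_ZX hatom_ZY hatom_XZ hatom_YZ

lemma IsOrthoCorner.orthoAdjacent_flipCorner (h : IsOrthoCorner X Y Z)
    (hXY : X ∈ compatibleLattice Y) [(flipCorner X Y Z).HasOrthogonalProjection] :
    OrthoAdjacent (flipCorner X Y Z) X ∧ OrthoAdjacent (flipCorner X Y Z) Y ∧
      OrthoAdjacent (flipCorner X Y Z) Z := by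
  have hY : Y = X ⊓ Y ⊔ Y ⊓ Zᗮ ⊔ Z ⊓ Xᗮ := by
    rw [sup_right_comm, inf_comm X Y]
    exact h.symm.eq_sup_sup_left (mem_compatibleLattice_comm.1 hXY)
  have hflip : flipCorner X Y Z = X ⊓ Y ⊔ Y ⊓ Zᗮ ⊔ Z ⊓ Yᗮ := sup_right_comm _ _ _
  have hinf_ZY : X ⊓ Y ⟂ Z ⊓ Yᗮ := isOrtho_of_le_of_le_orthogonal inf_le_right inf_le_right
  have hinf_ZX : X ⊓ Y ⟂ Z ⊓ Xᗮ := isOrtho_of_le_of_le_orthogonal inf_le_left inf_le_right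
  have hinf_XZ : X ⊓ Y ⟂ X ⊓ Zᗮ := isOrtho_of_le_of_le_orthogonal h.inf_le inf_le_right
  have hinf_YZ : X ⊓ Y ⟂ Y ⊓ Zᗮ := isOrtho_of_le_of_le_orthogonal h.inf_le inf_le_right
  have hZY_XZ : Z ⊓ Yᗮ ⟂ X ⊓ Zᗮ := isOrtho_of_le_of_le_orthogonal inf_le_left inf_le_right
  have hZY_YZ : Z ⊓ Yᗮ ⟂ Y ⊓ Zᗮ := isOrtho_of_le_of_le_orthogonal inf_le_left inf_le_right
  have hZX_YZ : Z ⊓ Xᗮ ⟂ Y ⊓ Zᗮ := isOrtho_of_le_of_le_orthogonal inf_le_left inf_le_right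
  have hYZ_XZ : Y ⊓ Zᗮ ⟂ X ⊓ Zᗮ :=
    isOrtho_of_le_of_le_orthogonal inf_le_left h.left_inf_orthogonal_le_orthogonal
  refine ⟨?_, ?_, ?_⟩
  · exact orthoAdjacent_of_eq_sup rfl (h.eq_sup_sup_left hXY) h.isAtom_right_inf_orthogonal
      h.isAtom_left_inf_orthogonal (isOrtho_sup_left.2 ⟨hinf_YZ, hZY_YZ⟩)
      (isOrtho_sup_left.2 ⟨hinf_XZ, hZY_XZ⟩) hYZ_XZ
  · exact orthoAdjacent_of_eq_sup hflip hY h.isAtom_inf_orthogonal_right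
      h.isAtom_inf_orthogonal_left (isOrtho_sup_left.2 ⟨hinf_ZY, hZY_YZ.symm⟩)
      (isOrtho_sup_left.2 ⟨hinf_ZX, hZX_YZ.symm⟩) h.isOrtho_inf_orthogonal
  · exact orthoAdjacent_of_eq_sup rfl h.eq_sup h.isAtom_right_inf_orthogonal
      h.isAtom_inf_orthogonal_left (isOrtho_sup_left.2 ⟨hinf_YZ, hZY_YZ⟩)
      (isOrtho_sup_left.2 ⟨hinf_ZX, h.isOrtho_inf_orthogonal⟩) hZX_YZ.symm

end OrthoAdjacent

lemma IsOrthoCorner.eq_flipCorner_or_eq_flipCorner_of_orthoAdjacent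
    {X Y Z W : Submodule ℂ H} [X.HasOrthogonalProjection] [Y.HasOrthogonalProjection]
    [Z.HasOrthogonalProjection] [W.HasOrthogonalProjection]
    (hZ : IsOrthoCorner X Y Z) (hW : IsOrthoCorner X Y W)
    (hZX : OrthoAdjacent Z X) (hZY : OrthoAdjacent Z Y) (hWX : OrthoAdjacent W X)
    (hWY : OrthoAdjacent W Y) (hWZ : OrthoAdjacent W Z) :
    W = flipCorner X Y Z ∨ W = flipCorner Y X Z := by
  obtain ⟨hcompZX, -, -⟩ := orthoAdjacent_iff.1 hZX
  obtain ⟨hcompZY, -, -⟩ := orthoAdjacent_iff.1 hZY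
  obtain ⟨hcompWX, -, -⟩ := orthoAdjacent_iff.1 hWX
  obtain ⟨hcompWY, -, -⟩ := orthoAdjacent_iff.1 hWY
  obtain ⟨hcompWZ, -, hatom⟩ := orthoAdjacent_iff.1 hWZ
  exact hZ.eq_flipCorner_or_eq_flipCorner hW (mem_compatibleLattice_comm.1 hcompZX)
    (mem_compatibleLattice_comm.1 hcompZY) hcompWZ (mem_compatibleLattice_comm.1 hcompWX)
    (mem_compatibleLattice_comm.1 hcompWY) (mem_compatibleLattice_comm.1 hcompWZ) hatom

lemma mem_Ginf_iff_isClosed_of_orthoAdjacent {K L : Submodule ℂ H} (hL : L ∈ Ginf)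
    (h : OrthoAdjacent K L) : K ∈ Ginf ↔ IsClosed (K : Set H) := by
  refine ⟨And.left, fun hK => ?_⟩
  have := hK.completeSpace_coe
  have := hL.1.completeSpace_coe
  exact ⟨hK, fun _ => hL.2.1 (finiteDimensional_of_orthoAdjacent h),
    fun _ => hL.2.2 (finiteDimensional_of_orthoAdjacent (orthoAdjacent_orthogonal h))⟩

theorem stmt3_general (X Y Z : Submodule ℂ H) (hX : IsClosed (X : Set H))
    (hY : IsClosed (Y : Set H)) (hZ : IsClosed (Z : Set H)) (hcomp : Compatible X Y)
    (h2X : CodimIn (X ⊓ Y) X 2) (h2Y : CodimIn (X ⊓ Y) Y 2)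
    (hZX : OrthoAdjacent Z X) (hZY : OrthoAdjacent Z Y) :
    {W : Submodule ℂ H | IsClosed (W : Set H) ∧
      OrthoAdjacent W X ∧ OrthoAdjacent W Y ∧ OrthoAdjacent W Z}.encard = 2 := by
  have := hX.completeSpace_coe
  have := hY.completeSpace_coe
  have := hZ.completeSpace_coe
  have hXY := compatible_iff_mem_compatibleLattice.1 hcomp
  have hcorner {W : Submodule ℂ H} [W.HasOrthogonalProjection] :
      OrthoAdjacent W X → OrthoAdjacent W Y → IsOrthoCorner X Y W :=
    isOrthoCorner_of_orthoAdjacent hcomp (h2X.not_wcovBy one_lt_two) (h2Y.not_wcovBy one_lt_two)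
  have hZ_corner := hcorner hZX hZY
  rw [Set.encard_eq_two]
  refine ⟨_, _, hZ_corner.flipCorner_ne_flipCorner, Set.ext fun W => ⟨?_, ?_⟩⟩
  · rintro ⟨hW, hWX, hWY, hWZ⟩
    have := hW.completeSpace_coe
    exact hZ_corner.eq_flipCorner_or_eq_flipCorner_of_orthoAdjacent (hcorner hWX hWY)
      hZX hZY hWX hWY hWZ
  · rintro (rfl | rfl)
    · have hclosed := hZ_corner.isClosed_flipCorner hX hY
      have := hclosed.completeSpace_coe
      exact ⟨hclosed, hZ_corner.orthoAdjacent_flipCorner hXY⟩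
    · have hclosed := hZ_corner.symm.isClosed_flipCorner hY hX
      have := hclosed.completeSpace_coe
      obtain ⟨hY_adj, hX_adj, hZ_adj⟩ :=
        hZ_corner.symm.orthoAdjacent_flipCorner (mem_compatibleLattice_comm.1 hXY)
      exact ⟨hclosed, hX_adj, hY_adj, hZ_adj⟩

/-- if `X, Y ∈ G_∞(H)` are compatible with `X ∩ Y` of codimension 2 in both, and
`Z ∈ G_∞(H)` is ortho-adjacent to both, then there are precisely two elements of `G_∞(H)`
ortho-adjacent to each of `X, Y, Z`. -/
theorem stmt3 (hH : ¬FiniteDimensional ℂ H) (X Y Z : Submodule ℂ H)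
    (hX : X ∈ Ginf (H := H)) (hY : Y ∈ Ginf (H := H)) (hZ : Z ∈ Ginf (H := H))
    (hcomp : Compatible X Y)
    (h2X : CodimIn (X ⊓ Y) X 2) (h2Y : CodimIn (X ⊓ Y) Y 2)
    (hZX : OrthoAdjacent Z X) (hZY : OrthoAdjacent Z Y) :
    {W : Submodule ℂ H | W ∈ Ginf (H := H) ∧
      OrthoAdjacent W X ∧ OrthoAdjacent W Y ∧ OrthoAdjacent W Z}.encard = 2 := by
  rw [← stmt3_general X Y Z hX.1 hY.1 hZ.1 hcomp h2X h2Y hZX hZY]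
  congr! 3 with W
  exact and_congr_left fun hW => mem_Ginf_iff_isClosed_of_orthoAdjacent hX hW.1
end
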